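/- arXiv:1508.04102 — 3 statements merged into one kernel-verified Lean document; each statement's English description precedes it below -/
import Mathlib

section
/- Consider the system of second-order ODEs in ℝⁿ given by ẍᵢ = fᵢ(t, xᵢ, ẋᵢ) + fᵢ^fr(t, xᵢ, ẋᵢ) + fᵢ^int(t, x₁, ẋ₁, …, xₙ, ẋₙ), i = 1,…,n. Assume: (1) each fᵢ and each fᵢ^int is bounded; (2) for each i there exists dᵢ > 0 such that sup{ fᵢ^fr(t, q, p)·p / p² : t ∈ [0,T], q ∈ [aᵢ, bᵢ], p² > dᵢ } < 0; (3) for every t₀ ∈ ℝ and every initial state (x⁰, v⁰) with x⁰ ∈ ∏ⱼ [aⱼ, bⱼ], with xᵢ⁰ ∈ {aᵢ, bᵢ} for at least one index i and with vᵢ⁰ = 0 for every index i for which xᵢ⁰ ∈ {aᵢ, bᵢ}, every solution x(·) of the system with x(t₀) = x⁰, ẋ(t₀) = v⁰ satisfies: there exists ε > 0 such that x(t) ∉ ∏ⱼ [aⱼ, bⱼ] for all t ∈ (t₀, t₀ + ε). Then there exists a solution x : ℝ → ℝⁿ of the system such that xᵢ(t + T) = xᵢ(t) and ẋᵢ(t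 + T) = ẋᵢ(t) for all t and all i, and xᵢ(t) ∈ (aᵢ, bᵢ) for all t ∈ ℝ and all i = 1,…,n. -/
open Set

/-- A pair of functions `(x, v)` is a solution of the system
`ẍᵢ = fᵢ(t, xᵢ, ẋᵢ) + fᵢ^fr(t, xᵢ, ẋᵢ) + fᵢ^int(t, x, ẋ)` on the set `I ⊆ ℝ`. -/
def IsSolution0 (n : ℕ) (f ffr : Fin n → ℝ → ℝ → ℝ → ℝ)
    (fint : Fin n → ℝ → (Fin n → ℝ) → (Fin n → ℝ) → ℝ)
    (x v : ℝ → Fin n → ℝ) (I : Set ℝ) : Prop :=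
  ∀ t ∈ I, ∀ i : Fin n,
    HasDerivAt (fun s => x s i) (v t i) t ∧
    HasDerivAt (fun s => v s i)
      (f i t (x t i) (v t i) + ffr i t (x t i) (v t i) + fint i t (x t) (v t)) t

/-!
Outside the box the force is frozen at the nearest point of the box and of a large cube of
velocities, and the resulting system is written as `ẍ = x + g t x ẋ` with `g` bounded. The linear
part `ẍ = x` has no nonzero `T`-periodic solution, so `T`-periodic solutions of the modified system
are fixed points of a map with bounded range, and Brouwer's theorem provides one.

The exit condition forces the acceleration to point out of the box at every boundary point where
the corresponding velocity vanishes: if it pointed inwards, the solution through that point would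
stay in the box for a short time. A maximum principle then confines the periodic solution to the
box, friction confines its velocity to the cube, so it solves the original system, and the exit
condition once more keeps it off the boundary.
-/

section PolynomialDependence

open Polynomial MeasureTheory Module

lemma exists_polynomial_eval_eq_det_one_add_smul {R M : Type*} [CommRing R] [Nontrivial R]
    [AddCommGroup M] [Module R M] [Free R M] [Module.Finite R M] (f : M →ₗ[R] M) :
    ∃ p : R[X], p.natDegree ≤ finrank R M ∧ ∀ t, p.eval t = LinearMap.det (1 + t • f) := by
  classical
  let b := finBasis R M
  let A := LinearMap.toMatrix b b f
  refine ⟨((X : R[X]) • A.map C + (1 : Matrix _ _ R).map C).det, ?_, fun t => ?_⟩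
  · simpa only [Fintype.card_fin] using natDegree_det_X_add_C_le A 1
  · rw [← LinearMap.det_toMatrix b, ← coe_evalRingHom, RingHom.map_det, map_add, map_add,
      map_smul (LinearMap.toMatrix b b), Module.End.one_eq_id, LinearMap.toMatrix_id]
    congr 1
    ext i j
    simp only [A, coe_evalRingHom, RingHom.mapMatrix_apply, Matrix.map_apply, Matrix.add_apply,
      Matrix.smul_apply, smul_eq_mul, eval_mul, eval_X, eval_C]
    ring

lemma exists_polynomial_eval_eq_integral {α : Type*} [MeasurableSpace α] {μ : Measure α}
    {d : ℕ} {p : α → ℝ[X]} (hdeg : ∀ x, (p x).natDegree ≤ d)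
    (hint : ∀ t, Integrable (fun x => (p x).eval t) μ) :
    ∃ P : ℝ[X], ∀ t, P.eval t = ∫ x, (p x).eval t ∂μ := by
  let nodes : ℕ → ℝ := Nat.cast
  let s := Finset.range (d + 1)
  have interpolation (x : α) (t : ℝ) :
      (p x).eval t = ∑ k ∈ s, (p x).eval (nodes k) * (Lagrange.basis s nodes k).eval t := by
    have hlt : (p x).degree < s.card := by
      rw [Finset.card_range]
      exact degree_le_natDegree.trans_lt (mod_cast Nat.lt_succ_of_le (hdeg x))
    conv_lhs => rw [Lagrange.eq_interpolate Nat.cast_injective.injOn hlt]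
    simp only [Lagrange.interpolate_apply, eval_finsetSum, eval_mul, eval_C]
    rfl
  refine ⟨∑ k ∈ s, C (∫ x, (p x).eval (nodes k) ∂μ) * Lagrange.basis s nodes k, fun t => ?_⟩
  simp_rw [interpolation _ t]
  rw [integral_finsetSum _ fun k _ => (hint _).mul_const _]
  simp only [eval_finsetSum, eval_mul, eval_C, integral_mul_const]

end PolynomialDependence

section Brouwer

open MeasureTheory Metric Filter Topology Function

open scoped NNReal RealInnerProductSpace

lemma inter_frontier_nonempty_of_isPreconnected {X : Type*} [TopologicalSpace X] {s t : Set X}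
    (ht : IsPreconnected t) (hin : (t ∩ s).Nonempty) (hout : (t \ s).Nonempty) :
    (t ∩ frontier s).Nonempty := by
  obtain ⟨x, hxt, hxs⟩ := hin
  obtain ⟨y, hyt, hys⟩ := hout
  have := Subtype.preconnectedSpace ht
  have hfrontier : (frontier ((↑) ⁻¹' s : Set t)).Nonempty :=
    nonempty_frontier_iff.2 ⟨⟨⟨x, hxt⟩, hxs⟩, ne_univ_iff_exists_notMem _ |>.2 ⟨⟨y, hyt⟩, hys⟩⟩
  obtain ⟨z, hz⟩ := hfrontier
  exact ⟨z, z.2, continuous_subtype_val.frontier_preimage_subset s hz⟩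

lemma lipschitzWith_indicator_of_frontier_eq_zero {E F : Type*} [NormedAddCommGroup E]
    [NormedSpace ℝ E] [NormedAddCommGroup F] {φ : E → F} {K : ℝ≥0} {s : Set E} (hs : IsClosed s)
    (hφ : LipschitzOnWith K φ s) (h0 : ∀ x ∈ frontier s, φ x = 0) :
    LipschitzWith K (s.indicator φ) := by
  have across {x y : E} (hx : x ∈ s) (hy : y ∉ s) : ‖φ x‖ ≤ K * dist x y := by
    obtain ⟨z, hz, hzs⟩ := inter_frontier_nonempty_of_isPreconnected
      (convex_segment (𝕜 := ℝ) x y).isPreconnected ⟨x, left_mem_segment ℝ x y, hx⟩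
      ⟨y, right_mem_segment ℝ x y, hy⟩
    calc ‖φ x‖ = dist (φ x) (φ z) := by rw [h0 z hzs, dist_zero_right]
      _ ≤ K * dist x z := hφ.dist_le_mul x hx z (hs.frontier_subset hzs)
      _ ≤ K * dist x y := by
        gcongr
        rw [← dist_add_dist_of_mem_segment hz]
        exact le_add_of_nonneg_right dist_nonneg
  refine LipschitzWith.of_dist_le_mul fun x y => ?_
  by_cases hx : x ∈ s <;> by_cases hy : y ∈ s
  · simpa only [indicator_of_mem, hx, hy] using hφ.dist_le_mul x hx y hy
  · simpa [hx, hy] using across hx hy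
  · simpa [hx, hy, dist_comm x] using across hy hx
  · simp only [indicator_of_notMem, hx, hy, not_false_eq_true, dist_self]
    positivity

lemma bijOn_id_add_of_lipschitzWith {E : Type*} [NormedAddCommGroup E] [NormedSpace ℝ E]
    [CompleteSpace E] {φ : E → E} {K : ℝ≥0} (hφ : LipschitzWith K φ) (hK : K < 1) {s : Set E}
    (h0 : ∀ x ∉ s, φ x = 0) : BijOn (fun x => x + φ x) s s := by
  have happrox : ApproximatesLinearOn (fun x => x + φ x)
      (ContinuousLinearEquiv.refl ℝ E : E →L[ℝ] E) univ K := by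
    rw [ApproximatesLinearOn.approximatesLinearOn_iff_lipschitzOnWith, lipschitzOnWith_univ]
    convert hφ using 1
    ext x
    simp
  have hsmall : Subsingleton E ∨
      K < ‖((ContinuousLinearEquiv.refl ℝ E).symm : E →L[ℝ] E)‖₊⁻¹ := by
    rcases subsingleton_or_nontrivial E with h | h
    · exact Or.inl h
    · right
      rw [ContinuousLinearEquiv.refl_symm, ContinuousLinearEquiv.coe_refl]
      simpa using hK
  have hbij : Bijective fun x => x + φ x :=
    ⟨injOn_univ.1 (happrox.injOn hsmall), happrox.surjective hsmall⟩
  have hcompl : BijOn (fun x => x + φ x) sᶜ sᶜ :=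
    (bijOn_id sᶜ).congr fun x hx => by simp [h0 x hx]
  simpa only [compl_compl] using hcompl.compl hbij

lemma eventually_forall_det_one_add_smul_pos {E : Type*} [NormedAddCommGroup E] [NormedSpace ℝ E]
    {S : Set (E →L[ℝ] E)} (hS : IsCompact S) :
    ∀ᶠ t : ℝ in 𝓝 0, ∀ B ∈ S, 0 < (1 + t • B).det := by
  refine hS.eventually_forall_of_forall_eventually fun B _ => ?_
  have hcont : Continuous fun z : ℝ × (E →L[ℝ] E) => (1 + z.1 • z.2).det :=
    ContinuousLinearMap.continuous_det.comp (by fun_prop)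
  refine hcont.continuousAt.eventually_const_lt ?_
  simp [ContinuousLinearMap.det]

-- For small `t`, `id + t • φ` maps `s` onto itself, so this polynomial in `t` equals the volume of
-- `s` near `0`, hence everywhere.
lemma setIntegral_det_one_add_smul_fderiv {E : Type*} [NormedAddCommGroup E] [NormedSpace ℝ E]
    [FiniteDimensional ℝ E] [MeasurableSpace E] [BorelSpace E] (μ : Measure E)
    [μ.IsAddHaarMeasure] {φ : E → E} {φ' : E → E →L[ℝ] E} {K : ℝ≥0} {s : Set E}
    (hs : IsCompact s) (hφ : LipschitzWith K φ) (h0 : ∀ x ∉ s, φ x = 0)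
    (hφ' : ∀ x ∈ s, HasFDerivWithinAt φ (φ' x) s x) (hcont : ContinuousOn φ' s) (t : ℝ) :
    ∫ x in s, (1 + t • φ' x).det ∂μ = μ.real s := by
  have hsmall : ∀ᶠ t : ℝ in 𝓝 0, ∫ x in s, (1 + t • φ' x).det ∂μ = μ.real s := by
    have hK : ∀ᶠ t : ℝ in 𝓝 0, ‖t‖₊ * K < 1 :=
      (by fun_prop : Continuous fun t : ℝ => ‖t‖₊ * K).continuousAt.eventually_lt_const (by simp)
    filter_upwards [hK, eventually_forall_det_one_add_smul_pos (hs.image_of_continuousOn hcont)]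
      with t htK hdet
    have hbij : BijOn (fun x => x + t • φ x) s s :=
      bijOn_id_add_of_lipschitzWith ((lipschitzWith_smul t).comp hφ) htK
        fun x hx => by rw [comp_apply, h0 x hx, smul_zero]
    have hderiv : ∀ x ∈ s, HasFDerivWithinAt (fun x => x + t • φ x) (1 + t • φ' x) s x :=
      fun x hx => (hasFDerivWithinAt_id x s).add ((hφ' x hx).const_smul t)
    have hvolume := integral_image_eq_integral_abs_det_fderiv_smul μ hs.measurableSet hderiv
      hbij.injOn fun _ => (1 : ℝ)
    rw [hbij.image_eq] at hvolume
    simp only [integral_const, smul_eq_mul, mul_one, measureReal_restrict_apply_univ] at hvolume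
    rw [hvolume]
    exact setIntegral_congr_fun hs.measurableSet fun x hx =>
      (abs_of_pos (hdet _ (mem_image_of_mem φ' hx))).symm
  choose p hdeg hp using fun x =>
    exists_polynomial_eval_eq_det_one_add_smul (φ' x : E →ₗ[ℝ] E)
  have hp' (x : E) (t : ℝ) : (p x).eval t = (1 + t • φ' x).det := hp x t
  obtain ⟨P, hP⟩ := exists_polynomial_eval_eq_integral (μ := μ.restrict s) hdeg fun t => by
    simp_rw [hp']
    exact (ContinuousLinearMap.continuous_det.comp_continuousOn
      (continuousOn_const.add (hcont.const_smul t))).integrableOn_compact hs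
  simp_rw [hp'] at hP
  have hconst : P = Polynomial.C (μ.real s) := by
    refine Polynomial.eq_of_infinite_eval_eq _ _ (infinite_of_mem_nhds 0 ?_)
    filter_upwards [hsmall] with t ht
    simp [hP, ht]
  rw [← hP, hconst, Polynomial.eval_C]

section InnerProductSpace

variable {E : Type*} [NormedAddCommGroup E] [InnerProductSpace ℝ E]

lemma det_eq_zero_of_norm_eventually_eq_one [FiniteDimensional ℝ E] {r : E → E}
    {r' : E →L[ℝ] E} {x : E} (hr : HasFDerivAt r r' x) (hnorm : ∀ᶠ y in 𝓝 x, ‖r y‖ = 1) :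
    r'.det = 0 := by
  by_contra hdet
  have horth (v : E) : ⟪r x, r' v⟫ = 0 := by
    have hconst : HasFDerivAt (fun y => ⟪r y, r y⟫) (0 : E →L[ℝ] ℝ) x := by
      refine (hasFDerivAt_const (1 : ℝ) x).congr_of_eventuallyEq ?_
      filter_upwards [hnorm] with y hy
      rw [real_inner_self_eq_norm_sq, hy, one_pow]
    have h := congrArg (fun l : E →L[ℝ] ℝ => l v) (hconst.unique (hr.inner ℝ hr))
    simp only [zero_apply, ContinuousLinearMap.comp_apply, ContinuousLinearMap.prod_apply,
      fderivInnerCLM_apply, real_inner_comm] at h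
    linarith
  obtain ⟨v, hv⟩ : ∃ v, r' v = r x :=
    ((Module.End.isUnit_iff _).1
      ((LinearMap.isUnit_iff_isUnit_det _).2 (isUnit_iff_ne_zero.2 hdet))).surjective (r x)
  have h := horth v
  rw [hv, real_inner_self_eq_norm_sq, hnorm.self_of_nhds] at h
  norm_num at h

lemma not_contDiffOn_retraction_sphere [FiniteDimensional ℝ E] {r : E → E} {U : Set E}
    (hU : IsOpen U) (hball : closedBall 0 1 ⊆ U) (hr : ContDiffOn ℝ 1 r U)
    (hnorm : ∀ x ∈ U, ‖r x‖ = 1) : ¬ ∀ x, ‖x‖ = 1 → r x = x := by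
  intro hsphere
  borelize E
  have hmem {x : E} (hx : x ∈ closedBall 0 1) : U ∈ 𝓝 x := hU.mem_nhds (hball hx)
  have hr' {x : E} (hx : x ∈ closedBall 0 1) : HasFDerivAt r (fderiv ℝ r x) x :=
    ((hr.contDiffAt (hmem hx)).differentiableAt one_ne_zero).hasFDerivAt
  have hcompact : IsCompact (closedBall (0 : E) 1) := isCompact_closedBall 0 1
  let φ : E → E := (closedBall 0 1).indicator fun x => r x - x
  obtain ⟨K, hK⟩ : ∃ K, LipschitzOnWith K (fun x => r x - x) (closedBall 0 1) := by
    refine LocallyLipschitzOn.exists_lipschitzOnWith_of_compact hcompact fun x hx => ?_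
    obtain ⟨K, t, ht, hK⟩ :=
      ((hr.contDiffAt (hmem hx)).sub contDiffAt_id).exists_lipschitzOnWith
    exact ⟨K, t, mem_nhdsWithin_of_mem_nhds ht, hK⟩
  have hφ : LipschitzWith K φ :=
    lipschitzWith_indicator_of_frontier_eq_zero isClosed_closedBall hK fun x hx =>
      sub_eq_zero.2 (hsphere x (mem_sphere_zero_iff_norm.1 (frontier_closedBall_subset_sphere hx)))
  have hφ' : ∀ x ∈ closedBall 0 1,
      HasFDerivWithinAt φ (fderiv ℝ r x - 1) (closedBall 0 1) x := fun x hx =>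
    ((hr' hx).sub (hasFDerivAt_id x)).hasFDerivWithinAt.congr
      (fun y hy => indicator_of_mem hy _) (indicator_of_mem hx _)
  have hvolume := setIntegral_det_one_add_smul_fderiv volume hcompact hφ
    (fun x hx => indicator_of_notMem hx _) hφ'
    (((hr.continuousOn_fderiv_of_isOpen hU le_rfl).mono hball).sub continuousOn_const) 1
  have hzero : ∀ x ∈ closedBall (0 : E) 1, (1 + (1 : ℝ) • (fderiv ℝ r x - 1)).det = 0 := by
    intro x hx
    rw [one_smul, add_sub_cancel]
    exact det_eq_zero_of_norm_eventually_eq_one (hr' hx) (eventually_of_mem (hmem hx) hnorm)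
  rw [setIntegral_congr_fun isClosed_closedBall.measurableSet hzero, integral_zero] at hvolume
  exact (ENNReal.toReal_pos (measure_closedBall_pos volume (0 : E) one_pos).ne'
    hcompact.measure_ne_top).ne hvolume

/-- A quarter of the discriminant of the quadratic equation `‖x + s • u‖ ^ 2 = 1` in `s`. -/
def sphereDiscrim (x u : E) : ℝ := ⟪x, u⟫ ^ 2 + ‖u‖ ^ 2 * (1 - ‖x‖ ^ 2)

/-- The point where the ray from `x` in direction `u` leaves the unit ball; its parameter is the
larger root of `‖x + s • u‖ ^ 2 = 1`. -/
noncomputable def rayExit (x u : E) : E := x + ((-⟪x, u⟫ + √(sphereDiscrim x u)) / ‖u‖ ^ 2) • u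

lemma norm_rayExit {x u : E} (hu : u ≠ 0) (hD : 0 ≤ sphereDiscrim x u) : ‖rayExit x u‖ = 1 := by
  have hq : 0 < ‖u‖ ^ 2 := by positivity
  set s := (-⟪x, u⟫ + √(sphereDiscrim x u)) / ‖u‖ ^ 2 with hs
  have hroot : s * ‖u‖ ^ 2 + ⟪x, u⟫ = √(sphereDiscrim x u) := by
    rw [hs, div_mul_cancel₀ _ hq.ne']
    ring
  have hquad : (s * ‖u‖ ^ 2 + ⟪x, u⟫) ^ 2 = ⟪x, u⟫ ^ 2 + ‖u‖ ^ 2 * (1 - ‖x‖ ^ 2) := by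
    rw [hroot, Real.sq_sqrt hD, sphereDiscrim]
  have hnorm : ‖rayExit x u‖ ^ 2 = ‖x‖ ^ 2 + 2 * (s * ⟪x, u⟫) + s ^ 2 * ‖u‖ ^ 2 := by
    rw [rayExit, norm_add_sq_real, inner_smul_right, norm_smul, mul_pow, Real.norm_eq_abs, sq_abs]
  have hone : ‖rayExit x u‖ ^ 2 = 1 := by
    rw [hnorm]
    refine mul_left_cancel₀ hq.ne' ?_
    linear_combination hquad
  exact (pow_eq_one_iff_of_nonneg (norm_nonneg _) two_ne_zero).1 hone

lemma rayExit_of_norm_eq_one {x u : E} (hx : ‖x‖ = 1) (hxu : 0 ≤ ⟪x, u⟫) : rayExit x u = x := by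
  simp [rayExit, sphereDiscrim, hx, Real.sqrt_sq hxu]

lemma inner_sub_pos_of_norm_le_one {x y : E} (hx : ‖x‖ = 1) (hy : ‖y‖ ≤ 1) (hne : y ≠ x) :
    0 < ⟪x, x - y⟫ := by
  have hpos : 0 < ‖x - y‖ ^ 2 := by
    have := sub_ne_zero.2 hne.symm
    positivity
  rw [norm_sub_sq_real, hx] at hpos
  rw [inner_sub_right, real_inner_self_eq_norm_sq, hx]
  nlinarith [norm_nonneg y]

lemma sphereDiscrim_sub_pos {x y : E} (hx : ‖x‖ ≤ 1) (hy : ‖y‖ ≤ 1) (hne : y ≠ x) :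
    0 < sphereDiscrim x (x - y) := by
  have hxy := sub_ne_zero.2 hne.symm
  rcases hx.lt_or_eq with h | h
  · have : 0 < 1 - ‖x‖ ^ 2 := by nlinarith [norm_nonneg x]
    unfold sphereDiscrim
    positivity
  · have := inner_sub_pos_of_norm_le_one h hy hne
    simp only [sphereDiscrim, h, one_pow, sub_self, mul_zero, add_zero]
    positivity

-- Otherwise sending `x` to the exit point of the ray from `g x` through `x` would retract a
-- neighbourhood of the ball onto the sphere.
lemma exists_isFixedPt_of_contDiff_of_norm_le_one [FiniteDimensional ℝ E] {g : E → E}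
    (hg : ContDiff ℝ 1 g) (hnorm : ∀ x, ‖g x‖ ≤ 1) : ∃ x, ‖x‖ ≤ 1 ∧ IsFixedPt g x := by
  by_contra! hne
  have hu : ContDiff ℝ 1 fun x => x - g x := contDiff_id.sub hg
  have hp : ContDiff ℝ 1 fun x => ⟪x, x - g x⟫ := contDiff_id.inner ℝ hu
  have hD : ContDiff ℝ 1 fun x => sphereDiscrim x (x - g x) :=
    (hp.pow 2).add ((hu.norm_sq ℝ).mul (contDiff_const.sub (contDiff_id.norm_sq ℝ)))
  let U : Set E := {x | 0 < sphereDiscrim x (x - g x)} ∩ {x | x - g x ≠ 0}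
  have hU : IsOpen U := (isOpen_lt continuous_const hD.continuous).inter
    (isOpen_ne_fun hu.continuous continuous_const)
  have hball : closedBall 0 1 ⊆ U := by
    intro x hx
    have hx : ‖x‖ ≤ 1 := mem_closedBall_zero_iff.1 hx
    exact ⟨sphereDiscrim_sub_pos hx (hnorm x) (hne x hx), sub_ne_zero.2 (Ne.symm (hne x hx))⟩
  have hretract : ContDiffOn ℝ 1 (fun x => rayExit x (x - g x)) U :=
    contDiffOn_id.add <| ContDiffOn.smul
      ((hp.contDiffOn.neg.add (hD.contDiffOn.sqrt fun x hx => hx.1.ne')).div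
        (hu.norm_sq ℝ).contDiffOn fun x hx => pow_ne_zero 2 (norm_ne_zero_iff.2 hx.2))
      hu.contDiffOn
  exact not_contDiffOn_retraction_sphere hU hball hretract
    (fun x hx => norm_rayExit hx.2 hx.1.le) fun x hx =>
      rayExit_of_norm_eq_one hx (inner_sub_pos_of_norm_le_one hx (hnorm x) (hne x hx.le)).le

lemma exists_isFixedPt_of_norm_le_one [FiniteDimensional ℝ E] {f : E → E} (hf : Continuous f)
    (hnorm : ∀ x, ‖f x‖ ≤ 1) : ∃ x, IsFixedPt f x := by
  by_contra! hne
  obtain ⟨x₀, -, hmin⟩ := (isCompact_closedBall (0 : E) 1).exists_isMinOn ⟨0, by simp⟩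
    (hf.sub continuous_id).norm.continuousOn
  set δ := ‖f x₀ - x₀‖
  have hδ0 : 0 < δ := norm_pos_iff.2 (sub_ne_zero.2 (hne x₀))
  obtain ⟨g, hg, hclose, -⟩ := hf.exists_contDiff_approx (ε := fun _ => δ / 4) 1
    continuous_const fun _ => by positivity
  simp only [dist_eq_norm] at hclose
  have hc : 0 < 1 + δ / 4 := by positivity
  have hscaled (x : E) : ‖(1 + δ / 4)⁻¹ • g x‖ ≤ 1 := by
    rw [norm_smul, norm_inv, Real.norm_of_nonneg hc.le, inv_mul_le_iff₀ hc, mul_one]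
    linarith [norm_le_norm_add_norm_sub' (g x) (f x), hnorm x, hclose x]
  obtain ⟨x, hx, hfix⟩ :=
    exists_isFixedPt_of_contDiff_of_norm_le_one (hg.const_smul (1 + δ / 4)⁻¹) hscaled
  have hgx : g x = (1 + δ / 4) • x := (inv_smul_eq_iff₀ hc.ne').1 hfix
  have hcontra : δ ≤ δ / 4 + δ / 4 :=
    calc δ ≤ ‖f x - x‖ := hmin (mem_closedBall_zero_iff.2 hx)
      _ = ‖(δ / 4) • x - (g x - f x)‖ := by rw [hgx]; congr 1; module
      _ ≤ ‖(δ / 4) • x‖ + ‖g x - f x‖ := norm_sub_le _ _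
      _ ≤ δ / 4 + δ / 4 := by
        rw [norm_smul, Real.norm_of_nonneg (by positivity)]
        exact add_le_add (mul_le_of_le_one_right (by positivity) hx) (hclose x).le
  linarith

end InnerProductSpace

theorem exists_isFixedPt_of_isBounded_range {E : Type*} [NormedAddCommGroup E] [NormedSpace ℝ E]
    [FiniteDimensional ℝ E] {f : E → E} (hf : Continuous f)
    (hbdd : Bornology.IsBounded (range f)) : ∃ x, IsFixedPt f x := by
  let e : E ≃L[ℝ] EuclideanSpace ℝ (Fin (Module.finrank ℝ E)) := toEuclidean
  obtain ⟨R, hR, hRf⟩ := (e.lipschitz.isBounded_image hbdd).exists_pos_norm_le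
  have hscaled (y) : ‖R⁻¹ • e (f (e.symm (R • y)))‖ ≤ 1 := by
    rw [norm_smul, norm_inv, Real.norm_of_nonneg hR.le, inv_mul_le_iff₀ hR, mul_one]
    exact hRf _ (mem_image_of_mem e (mem_range_self _))
  obtain ⟨y, hy⟩ := exists_isFixedPt_of_norm_le_one (by fun_prop) hscaled
  exact ⟨e.symm (R • y), e.eq_symm_apply.2 ((inv_smul_eq_iff₀ hR.ne').1 hy)⟩

end Brouwer

section BoundaryValueProblem

open scoped NNReal

lemma exists_solution_Icc_of_bounded_lipschitz {Z : Type*} [NormedAddCommGroup Z]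
    [NormedSpace ℝ Z] [CompleteSpace Z] {H : ℝ → Z → Z} {T : ℝ} {K L : ℝ≥0} (hT : 0 ≤ T)
    (hlip : ∀ t ∈ Icc 0 T, LipschitzWith K (H t))
    (hcont : ∀ z, ContinuousOn (fun t => H t z) (Icc 0 T))
    (hbdd : ∀ t ∈ Icc 0 T, ∀ z, ‖H t z‖ ≤ L) (z₀ : Z) :
    ∃ w : ℝ → Z, w 0 = z₀ ∧ ∀ t ∈ Icc 0 T, HasDerivWithinAt w (H t (w t)) (Icc 0 T) t := by
  have hpl : IsPicardLindelof H ⟨0, left_mem_Icc.2 hT⟩ z₀ (L * T.toNNReal) 0 L K :=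
    { lipschitzOnWith := fun t ht => (hlip t ht).lipschitzOnWith
      continuousOn := fun z _ => hcont z
      norm_le := fun t ht z _ => hbdd t ht z
      mul_max_le := by simp [hT] }
  exact hpl.exists_eq_forall_mem_Icc_hasDerivWithinAt₀

lemma dist_le_mul_exp_of_hasDerivWithinAt_Icc {Z : Type*} [NormedAddCommGroup Z]
    [NormedSpace ℝ Z] {H : ℝ → Z → Z} {T : ℝ} {K : ℝ≥0} {w₁ w₂ : ℝ → Z}
    (hlip : ∀ t ∈ Icc 0 T, LipschitzWith K (H t))
    (h₁ : ∀ t ∈ Icc 0 T, HasDerivWithinAt w₁ (H t (w₁ t)) (Icc 0 T) t)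
    (h₂ : ∀ t ∈ Icc 0 T, HasDerivWithinAt w₂ (H t (w₂ t)) (Icc 0 T) t) {t : ℝ}
    (ht : t ∈ Icc 0 T) : dist (w₁ t) (w₂ t) ≤ dist (w₁ 0) (w₂ 0) * Real.exp (K * t) := by
  have right_deriv {w : ℝ → Z} (h : ∀ t ∈ Icc 0 T, HasDerivWithinAt w (H t (w t)) (Icc 0 T) t) :
      ∀ t ∈ Ico 0 T, HasDerivWithinAt w (H t (w t)) (Ici t) t := fun t ht =>
    (h t (Ico_subset_Icc_self ht)).mono_of_mem_nhdsWithin (Icc_mem_nhdsGE_of_mem ht)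
  simpa only [sub_zero] using dist_le_of_trajectories_ODE_of_mem (s := fun _ => univ)
    (fun t ht => (hlip t (Ico_subset_Icc_self ht)).lipschitzOnWith)
    (fun t ht => (h₁ t ht).continuousWithinAt) (right_deriv h₁) (fun _ _ => mem_univ _)
    (fun t ht => (h₂ t ht).continuousWithinAt) (right_deriv h₂) (fun _ _ => mem_univ _)
    le_rfl t ht

-- The boundary condition is a fixed-point problem for the initial value `w 0`; its right-hand side
-- is bounded because `w` is `L`-Lipschitz.
lemma exists_solution_boundary_value {Z : Type*} [NormedAddCommGroup Z] [NormedSpace ℝ Z]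
    [FiniteDimensional ℝ Z] {H : ℝ → Z → Z} {T : ℝ} {K L : ℝ≥0} (hT : 0 ≤ T)
    (hlip : ∀ t ∈ Icc 0 T, LipschitzWith K (H t))
    (hcont : ∀ z, ContinuousOn (fun t => H t z) (Icc 0 T))
    (hbdd : ∀ t ∈ Icc 0 T, ∀ z, ‖H t z‖ ≤ L) (S : Z →L[ℝ] Z) :
    ∃ w : ℝ → Z, (∀ t ∈ Icc 0 T, HasDerivWithinAt w (H t (w t)) (Icc 0 T) t) ∧
      w 0 = S (w T - w 0) := by
  have := FiniteDimensional.complete ℝ Z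
  have hT' : T ∈ Icc 0 T := right_mem_Icc.2 hT
  choose w hw₀ hw using exists_solution_Icc_of_bounded_lipschitz hT hlip hcont hbdd
  have hflow : LipschitzWith (Real.exp (K * T)).toNNReal fun z => w z T := by
    refine LipschitzWith.of_dist_le_mul fun z₁ z₂ => ?_
    rw [Real.coe_toNNReal _ (Real.exp_nonneg _), mul_comm]
    simpa only [hw₀] using dist_le_mul_exp_of_hasDerivWithinAt_Icc hlip (hw z₁) (hw z₂) hT'
  have hdisplacement (z : Z) : ‖w z T - z‖ ≤ L * T := by
    simpa only [hw₀, sub_zero] using norm_image_sub_le_of_norm_deriv_le_segment' (hw z)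
      (fun t ht => hbdd t (Ico_subset_Icc_self ht) _) T hT'
  obtain ⟨z, hz⟩ := exists_isFixedPt_of_isBounded_range (f := fun z => S (w z T - z))
    (S.continuous.comp (hflow.continuous.sub continuous_id))
    (isBounded_iff_forall_norm_le.2 ⟨‖S‖ * (L * T), forall_mem_range.2 fun z =>
      S.le_opNorm_of_le (hdisplacement z)⟩)
  exact ⟨w z, hw z, by rw [hw₀]; exact hz.symm⟩

end BoundaryValueProblem

section PeriodicGluing

open Function

lemma exists_periodic_eqOn_Icc {α : Type*} {T : ℝ} (hT : 0 < T) {y : ℝ → α} (hy : y T = y 0) :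
    ∃ z : ℝ → α, Periodic z T ∧ EqOn z y (Icc 0 T) := by
  refine ⟨y ∘ toIcoMod hT 0, (toIcoMod_periodic hT 0).comp y, fun t ht => ?_⟩
  rcases ht.2.lt_or_eq with h | rfl
  · have hmod : toIcoMod hT 0 t = t := (toIcoMod_eq_self hT).2 ⟨ht.1, by rwa [zero_add]⟩
    rw [comp_apply, hmod]
  · have hmod : toIcoMod hT 0 t = 0 := by simpa using toIcoMod_apply_right hT 0
    rw [comp_apply, hmod, hy]

lemma hasDerivAt_of_periodic_of_hasDerivWithinAt_Icc {E : Type*} [NormedAddCommGroup E]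
    [NormedSpace ℝ E] {T : ℝ} (hT : 0 < T) {z z' : ℝ → E} (hz : Periodic z T)
    (hz' : Periodic z' T) (h : ∀ t ∈ Icc 0 T, HasDerivWithinAt z (z' t) (Icc 0 T) t) (t : ℝ) :
    HasDerivAt z (z' t) t := by
  have hzero : HasDerivAt z (z' 0) 0 := by
    have hright := h 0 (left_mem_Icc.2 hT.le)
    have hleft : HasDerivWithinAt z (z' 0) (Icc (-T) 0) 0 := by
      have hend : HasDerivWithinAt z (z' 0) (Icc 0 T) (0 + T) := by
        rw [zero_add, ← hz'.eq]
        exact h T (right_mem_Icc.2 hT.le)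
      have hmaps : MapsTo (fun s => s + T) (Icc (-T) 0) (Icc 0 T) := fun s hs =>
        ⟨by linarith [hs.1], by linarith [hs.2]⟩
      have hshift := HasDerivWithinAt.scomp 0 hend
        ((hasDerivWithinAt_id 0 (Icc (-T) 0)).add_const T) hmaps
      rw [one_smul] at hshift
      exact hshift.congr (fun s _ => (hz s).symm) (hz 0).symm
    have hunion := hleft.union hright
    rw [Icc_union_Icc_eq_Icc (neg_nonpos.2 hT.le) hT.le] at hunion
    exact hunion.hasDerivAt (Icc_mem_nhds (neg_neg_of_pos hT) hT)
  obtain ⟨n, ⟨hn₀, hnT⟩, -⟩ := existsUnique_sub_zsmul_mem_Ico hT t 0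
  rw [zero_add] at hnT
  have hbase : HasDerivAt z (z' (t - n • T)) (t - n • T) := by
    rcases hn₀.eq_or_lt with h₀ | h₀
    · rwa [← h₀]
    · exact (h _ ⟨hn₀, hnT.le⟩).hasDerivAt (Icc_mem_nhds h₀ hnT)
  simpa only [hz.sub_zsmul_eq, hz'.sub_zsmul_eq] using hbase.comp_sub_const t (n • T)

end PeriodicGluing

section NonresonantSystem

open Function NormedSpace

open scoped NNReal

lemma exp_smul_apply_exp_neg_smul_apply {Z : Type*} [NormedAddCommGroup Z] [NormedSpace ℝ Z]
    [CompleteSpace Z] (A : Z →L[ℝ] Z) (t : ℝ) (z : Z) : exp (t • A) (exp (-t • A) z) = z := by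
  let +nondep : NormedAlgebra ℚ (Z →L[ℝ] Z) := .restrictScalars ℚ ℝ _
  have h : exp (t • A) * exp (-t • A) = 1 := by
    rw [neg_smul, ← exp_add_of_commute (Commute.neg_right (Commute.refl _)), add_neg_cancel,
      exp_zero]
  exact congrArg (fun B : Z →L[ℝ] Z => B z) h

lemma hasDerivWithinAt_exp_smul_apply {Z : Type*} [NormedAddCommGroup Z] [NormedSpace ℝ Z]
    [CompleteSpace Z] (A : Z →L[ℝ] Z) {w : ℝ → Z} {g : Z} {s : Set ℝ} {t : ℝ}
    (hw : HasDerivWithinAt w (exp (-t • A) g) s t) :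
    HasDerivWithinAt (fun t => exp (t • A) (w t)) (A (exp (t • A) (w t)) + g) s t := by
  simpa only [mul_apply_eq_comp, exp_smul_apply_exp_neg_smul_apply] using
    (hasDerivAt_exp_smul_const' A t).hasDerivWithinAt.clm_apply hw

lemma injective_exp_neg_smul_sub_one {Z : Type*} [NormedAddCommGroup Z] [NormedSpace ℝ Z]
    [CompleteSpace Z] {A : Z →L[ℝ] Z} {T : ℝ} (hA : ∀ z, exp (T • A) z = z → z = 0) :
    Injective (exp (-T • A) - 1 : Z →L[ℝ] Z) := by
  refine (injective_iff_map_eq_zero _).2 fun z hz => hA z ?_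
  have hz' : exp (-T • A) z = z := sub_eq_zero.1 hz
  conv_lhs => rw [← hz']
  exact exp_smul_apply_exp_neg_smul_apply A T z

lemma exists_continuousLinearMap_rightInverse_of_injective {Z : Type*} [NormedAddCommGroup Z]
    [NormedSpace ℝ Z] [FiniteDimensional ℝ Z] {B : Z →L[ℝ] Z} (hB : Injective B) :
    ∃ S : Z →L[ℝ] Z, RightInverse S B := by
  let e := (LinearEquiv.ofInjectiveEndo (B : Z →ₗ[ℝ] Z) hB).toContinuousLinearEquiv
  exact ⟨e.symm, e.apply_symm_apply⟩

-- In the variable `w t = exp (-t • A) (z t)` the right-hand side is bounded and `z T = z 0` becomes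
-- `(exp (-T • A) - 1) (w 0) = w T - w 0`.
theorem exists_periodic_solution_of_nonresonant {Z : Type*} [NormedAddCommGroup Z]
    [NormedSpace ℝ Z] [FiniteDimensional ℝ Z] {A : Z →L[ℝ] Z} {G : ℝ → Z → Z} {T : ℝ} {K L : ℝ≥0}
    (hT : 0 < T) (hA : ∀ z, exp (T • A) z = z → z = 0) (hper : Periodic G T)
    (hcont : Continuous (uncurry G)) (hlip : ∀ t, LipschitzWith K (G t))
    (hbdd : ∀ t z, ‖G t z‖ ≤ L) :
    ∃ z : ℝ → Z, Periodic z T ∧ ∀ t, HasDerivAt z (A (z t) + G t (z t)) t := by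
  have := FiniteDimensional.complete ℝ Z
  have hexp : Continuous fun t : ℝ => exp (t • A) :=
    continuous_iff_continuousAt.2 fun t => (hasDerivAt_exp_smul_const A t).continuousAt
  obtain ⟨M, hM⟩ := isCompact_Icc.bddAbove_image (hexp.nnnorm.continuousOn (s := Icc (-T) T))
  have hpos {t : ℝ} (ht : t ∈ Icc 0 T) : ‖exp (t • A)‖₊ ≤ M :=
    hM (mem_image_of_mem _ ⟨by linarith [ht.1], ht.2⟩)
  have hneg {t : ℝ} (ht : t ∈ Icc 0 T) : ‖exp (-t • A)‖₊ ≤ M :=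
    hM (mem_image_of_mem _ ⟨neg_le_neg ht.2, by linarith [ht.1]⟩)
  obtain ⟨S, hS⟩ := exists_continuousLinearMap_rightInverse_of_injective
    (injective_exp_neg_smul_sub_one hA)
  obtain ⟨w, hw, hbdry⟩ := exists_solution_boundary_value (K := M * (K * M)) (L := M * L)
    (H := fun t w => exp (-t • A) (G t (exp (t • A) w))) hT.le
    (fun t ht => (((exp (-t • A)).lipschitz.comp ((hlip t).comp (exp (t • A)).lipschitz)).weaken
      (by gcongr; exacts [hneg ht, hpos ht])))
    (fun z => by
      refine Continuous.continuousOn ?_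
      exact (hexp.comp continuous_neg).clm_apply
        (hcont.comp (continuous_id.prodMk (hexp.clm_apply continuous_const))))
    (fun t ht z => (exp (-t • A)).le_of_opNorm_le_of_le (hneg ht) (hbdd t _)) S
  have hz : exp (T • A) (w T) = exp ((0 : ℝ) • A) (w 0) := by
    have h : exp (-T • A) (w 0) - w 0 = w T - w 0 := by
      conv_lhs => rw [hbdry]
      exact hS _
    rw [← sub_left_inj.1 h, exp_smul_apply_exp_neg_smul_apply, zero_smul, exp_zero]
    rfl
  obtain ⟨z, hzper, hzeq⟩ := exists_periodic_eqOn_Icc (y := fun t => exp (t • A) (w t)) hT hz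
  refine ⟨z, hzper, hasDerivAt_of_periodic_of_hasDerivWithinAt_Icc hT hzper
    (fun t => by simp only [hzper t, hper t]) fun t ht => ?_⟩
  refine HasDerivWithinAt.congr ?_ hzeq (hzeq ht)
  rw [hzeq ht]
  exact hasDerivWithinAt_exp_smul_apply A (hw t ht)

end NonresonantSystem

section SecondOrder

open Function NormedSpace

open scoped NNReal

lemma exp_apply_of_apply_eq_smul {Z : Type*} [NormedAddCommGroup Z] [NormedSpace ℝ Z]
    [CompleteSpace Z] {A : Z →L[ℝ] Z} {r : ℝ} {z : Z} (h : A z = r • z) :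
    exp A z = Real.exp r • z := by
  have hpow (n : ℕ) : (A ^ n) z = r ^ n • z := by
    induction n with
    | zero => simp
    | succ n ih =>
      rw [pow_succ', mul_apply_eq_comp, ih, map_smul, h, smul_smul, pow_succ]
  have hleft := (exp_series_hasSum_exp' (𝕂 := ℝ) A).mapL (ContinuousLinearMap.apply ℝ Z z)
  have hright := (exp_series_hasSum_exp' (𝕂 := ℝ) r).smul_const z
  rw [← Real.exp_eq_exp_ℝ] at hright
  refine hleft.unique ?_
  simpa [hpow, smul_smul] using hright

lemma eq_zero_of_exp_smul_apply_eq_self {Z : Type*} [NormedAddCommGroup Z] [NormedSpace ℝ Z]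
    [CompleteSpace Z] {A : Z →L[ℝ] Z} (hA : ∀ z, A (A z) = z) {T : ℝ} (hT : T ≠ 0) {z : Z}
    (hz : exp (T • A) z = z) : z = 0 := by
  have hcomm : exp (T • A) (A z) = A z := by
    have h : Commute (exp (T • A)) A := ((Commute.refl A).smul_left T).exp_left
    conv_rhs => rw [← hz]
    exact congrArg (fun B : Z →L[ℝ] Z => B z) h.eq
  have eigenvector_eq_zero {u : Z} {r : ℝ} (hr : r ≠ 0) (hu : A u = r • u)
      (hfix : exp (T • A) u = u) : u = 0 := by
    have hu' : (T • A) u = (T * r) • u := by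
      rw [smul_apply, hu, smul_smul]
    have hsmul : (Real.exp (T * r) - 1) • u = 0 := by
      rw [sub_smul, one_smul, ← exp_apply_of_apply_eq_smul hu', hfix, sub_self]
    refine (smul_eq_zero.1 hsmul).resolve_left ?_
    rw [sub_eq_zero, Real.exp_eq_one_iff]
    exact mul_ne_zero hT hr
  have hplus : z + A z = 0 := eigenvector_eq_zero (r := 1) one_ne_zero
    (by rw [map_add, hA, one_smul, add_comm]) (by rw [map_add, hz, hcomm])
  have hminus : z - A z = 0 := eigenvector_eq_zero (r := -1) (by norm_num)
    (by rw [map_sub, hA, neg_one_smul, neg_sub]) (by rw [map_sub, hz, hcomm])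
  have htwo : (2 : ℝ) • z = 0 := by
    calc (2 : ℝ) • z = (z + A z) + (z - A z) := by module
      _ = 0 := by rw [hplus, hminus, add_zero]
  exact (smul_eq_zero.1 htwo).resolve_left two_ne_zero

/-- `x` is a solution of `ẍ = F t x ẋ` on `I`, with `v` its velocity. -/
def IsSecondOrderSolution {E : Type*} [NormedAddCommGroup E] [NormedSpace ℝ E]
    (F : ℝ → E → E → E) (x v : ℝ → E) (I : Set ℝ) : Prop :=
  ∀ t ∈ I, HasDerivAt x (v t) t ∧ HasDerivAt v (F t (x t) (v t)) t

lemma IsSecondOrderSolution.of_hasDerivAt_prod {E : Type*} [NormedAddCommGroup E]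
    [NormedSpace ℝ E] {F : ℝ → E → E → E} {z : ℝ → E × E} {I : Set ℝ}
    (h : ∀ t ∈ I, HasDerivAt z ((z t).2, F t (z t).1 (z t).2) t) :
    IsSecondOrderSolution F (fun t => (z t).1) (fun t => (z t).2) I := fun t ht =>
  ⟨(hasFDerivAt_fst (𝕜 := ℝ) (p := z t)).comp_hasDerivAt t (h t ht),
    (hasFDerivAt_snd (𝕜 := ℝ) (p := z t)).comp_hasDerivAt t (h t ht)⟩

theorem exists_periodic_isSecondOrderSolution_add {E : Type*} [NormedAddCommGroup E]
    [NormedSpace ℝ E] [FiniteDimensional ℝ E] {g : ℝ → E → E → E} {T : ℝ} {K L : ℝ≥0}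
    (hT : 0 < T) (hper : Periodic g T)
    (hcont : Continuous fun u : ℝ × E × E => g u.1 u.2.1 u.2.2)
    (hlip : ∀ t, LipschitzWith K (uncurry (g t))) (hbdd : ∀ t x v, ‖g t x v‖ ≤ L) :
    ∃ x v : ℝ → E, Periodic x T ∧ Periodic v T ∧
      IsSecondOrderSolution (fun t x v => x + g t x v) x v univ := by
  have := FiniteDimensional.complete ℝ E
  let A : E × E →L[ℝ] E × E := (ContinuousLinearMap.snd ℝ E E).prod (ContinuousLinearMap.fst ℝ E E)
  obtain ⟨z, hzper, hz⟩ := exists_periodic_solution_of_nonresonant (A := A)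
    (G := fun t z => (0, g t z.1 z.2)) hT
    (fun z => eq_zero_of_exp_smul_apply_eq_self (fun _ => rfl) hT.ne')
    (fun t => by simp only [hper t]) (continuous_const.prodMk hcont)
    (fun t => (LipschitzWith.const 0).prodMk (hlip t))
    (fun t z => by simpa using hbdd t z.1 z.2)
  refine ⟨_, _, hzper.comp Prod.fst, hzper.comp Prod.snd, .of_hasDerivAt_prod fun t _ => ?_⟩
  simpa [A] using hz t

end SecondOrder

section LocalExistence

open Filter Topology Metric

open scoped NNReal

lemma exists_eventually_hasDerivAt_of_locallyLipschitz {Z : Type*} [NormedAddCommGroup Z]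
    [NormedSpace ℝ Z] [CompleteSpace Z] {H : ℝ × Z → Z} (hH : LocallyLipschitz H) (t₀ : ℝ)
    (z₀ : Z) : ∃ z : ℝ → Z, z t₀ = z₀ ∧ ∀ᶠ t in 𝓝 t₀, HasDerivAt z (H (t, z t)) t := by
  obtain ⟨K, U, hU, hK⟩ := hH (t₀, z₀)
  let L : ℝ≥0 := ‖H (t₀, z₀)‖₊ + 1
  have hL : ∀ᶠ u in 𝓝 (t₀, z₀), ‖H u‖ < L :=
    hH.continuous.norm.continuousAt.eventually_lt_const (by simp [L])
  obtain ⟨ε, hε, hball⟩ := nhds_basis_closedBall.mem_iff.1 (inter_mem hU hL)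
  rw [← closedBall_prod_same] at hball
  lift ε to ℝ≥0 using hε.le
  have hL0 : (0 : ℝ) < L := by positivity
  have hδε : (ε / L : ℝ) ≤ ε := div_le_self ε.2 (by simp [L])
  have hmem {t : ℝ} (ht : t ∈ Icc (t₀ - ε / L) (t₀ + ε / L)) {z : Z} (hz : z ∈ closedBall z₀ ε) :
      (t, z) ∈ U ∩ {u | ‖H u‖ < L} :=
    hball ⟨closedBall_subset_closedBall hδε (Real.closedBall_eq_Icc ▸ ht), hz⟩
  have hδ : (0 : ℝ) < ε / L := by positivity
  have hpl : IsPicardLindelof (fun t z => H (t, z))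
      (⟨t₀, by constructor <;> linarith⟩ : Icc (t₀ - ε / L) (t₀ + ε / L)) z₀ ε 0 L K :=
    { lipschitzOnWith := fun t ht => by
        simpa [Function.comp_def] using hK.comp
          ((LipschitzWith.const t).prodMk LipschitzWith.id).lipschitzOnWith
          fun z hz => (hmem ht hz).1
      continuousOn := fun z _ =>
        (hH.continuous.comp (continuous_id.prodMk continuous_const)).continuousOn
      norm_le := fun t ht z hz => (hmem ht hz).2.le
      mul_max_le := by simp [mul_div_cancel₀ (ε : ℝ) hL0.ne'] }
  obtain ⟨z, hz₀, hz⟩ := hpl.exists_eq_forall_mem_Icc_hasDerivWithinAt₀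
  refine ⟨z, hz₀, ?_⟩
  filter_upwards [Ioo_mem_nhds (sub_lt_self t₀ hδ) (lt_add_of_pos_right t₀ hδ)] with t ht
  exact (hz t (Ioo_subset_Icc_self ht)).hasDerivAt (Icc_mem_nhds ht.1 ht.2)

lemma exists_isSecondOrderSolution_of_locallyLipschitz {E : Type*} [NormedAddCommGroup E]
    [NormedSpace ℝ E] [CompleteSpace E] {F : ℝ → E → E → E}
    (hF : LocallyLipschitz fun u : ℝ × E × E => F u.1 u.2.1 u.2.2) (t₀ : ℝ) (x₀ v₀ : E) :
    ∃ x v : ℝ → E, ∃ I ∈ 𝓝 t₀, x t₀ = x₀ ∧ v t₀ = v₀ ∧ IsSecondOrderSolution F x v I := by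
  obtain ⟨z, hz₀, hz⟩ := exists_eventually_hasDerivAt_of_locallyLipschitz
    (H := fun u : ℝ × E × E => (u.2.2, F u.1 u.2.1 u.2.2))
    ((LipschitzWith.prod_snd.comp LipschitzWith.prod_snd).locallyLipschitz.prodMk hF) t₀ (x₀, v₀)
  exact ⟨_, _, _, hz, congrArg Prod.fst hz₀, congrArg Prod.snd hz₀,
    .of_hasDerivAt_prod fun _ ht => ht⟩

end LocalExistence

section MaximumPrinciple

open Topology Function

variable {x v w : ℝ → ℝ} {T a b : ℝ}

lemma isLocalMax_of_hasDerivAt_of_neg {t w : ℝ} (hx : ∀ᶠ s in 𝓝 t, HasDerivAt x (v s) s)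
    (hv : HasDerivAt v w t) (hv₀ : v t = 0) (hw : w < 0) : IsLocalMax x t := by
  have hderiv : deriv x =ᶠ[𝓝 t] v := hx.mono fun s hs => hs.deriv
  refine isLocalMax_of_deriv_deriv_neg ?_ ?_ hx.self_of_nhds.continuousAt
  · rwa [hderiv.deriv_eq, hv.deriv]
  · rw [hderiv.eq_of_nhds, hv₀]

lemma eventually_le_of_hasDerivAt_of_neg {t w : ℝ} (hx : ∀ᶠ s in 𝓝 t, HasDerivAt x (v s) s)
    (hv : HasDerivAt v w t) (hxb : x t ≤ b) (h : x t = b → v t = 0 ∧ w < 0) :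
    ∀ᶠ s in 𝓝 t, x s ≤ b := by
  rcases hxb.lt_or_eq with hlt | heq
  · exact hx.self_of_nhds.continuousAt.eventually_le_const hlt
  · rw [← heq]
    exact isLocalMax_of_hasDerivAt_of_neg hx hv (h heq).1 (h heq).2

lemma eventually_mem_Icc_of_hasDerivAt {t w : ℝ} (hx : ∀ᶠ s in 𝓝 t, HasDerivAt x (v s) s)
    (hv : HasDerivAt v w t) (hxt : x t ∈ Icc a b) (ha : x t = a → v t = 0 ∧ 0 < w)
    (hb : x t = b → v t = 0 ∧ w < 0) : ∀ᶠ s in 𝓝 t, x s ∈ Icc a b := by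
  have hlower : ∀ᶠ s in 𝓝 t, -x s ≤ -a :=
    eventually_le_of_hasDerivAt_of_neg (hx.mono fun s hs => hs.neg) hv.neg (neg_le_neg hxt.1)
      fun h => by simpa using ha (neg_injective h)
  filter_upwards [hlower, eventually_le_of_hasDerivAt_of_neg hx hv hxt.2 hb] with s h₁ h₂
  exact ⟨neg_le_neg_iff.1 h₁, h₂⟩

lemma exists_forall_le_of_periodic (hT : 0 < T) (hper : Periodic x T) (hx : Continuous x) :
    ∃ t, ∀ s, x s ≤ x t := by
  obtain ⟨t, -, ht⟩ := isCompact_Icc.exists_isMaxOn (nonempty_Icc.2 hT.le) hx.continuousOn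
  refine ⟨t, fun s => ?_⟩
  obtain ⟨s', hs', hss'⟩ := hper.exists_mem_Ico₀ hT s
  exact hss' ▸ ht (Ico_subset_Icc_self hs')

lemma le_of_periodic_of_deriv_ne_zero (hT : 0 < T) (hper : Periodic v T)
    (hv : ∀ t, HasDerivAt v (w t) t) (h : ∀ t, b < v t → w t ≠ 0) (t : ℝ) : v t ≤ b := by
  obtain ⟨t₀, ht₀⟩ := exists_forall_le_of_periodic hT hper
    (continuous_iff_continuousAt.2 fun t => (hv t).continuousAt)
  have hmax : IsLocalMax v t₀ := .of_forall ht₀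
  refine (ht₀ t).trans (le_of_not_gt fun hb => h t₀ hb ?_)
  exact hmax.hasDerivAt_eq_zero (hv t₀)

lemma mem_Icc_of_periodic_of_deriv_ne_zero (hT : 0 < T) (hper : Periodic v T)
    (hv : ∀ t, HasDerivAt v (w t) t) (h : ∀ t, v t ∉ Icc a b → w t ≠ 0) (t : ℝ) :
    v t ∈ Icc a b := by
  refine ⟨neg_le_neg_iff.1 ?_, le_of_periodic_of_deriv_ne_zero hT hper hv
    (fun t ht => h t fun hmem => ht.not_ge hmem.2) t⟩
  exact le_of_periodic_of_deriv_ne_zero hT (hper.comp Neg.neg) (fun t => (hv t).neg)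
    (fun t ht => neg_ne_zero.2 (h t fun hmem => (neg_lt_neg_iff.1 ht).not_ge hmem.1)) t

lemma le_of_periodic_of_second_deriv_pos (hT : 0 < T) (hper : Periodic x T)
    (hx : ∀ t, HasDerivAt x (v t) t) (hv : ∀ t, HasDerivAt v (w t) t)
    (h : ∀ t, b < x t → v t = 0 → 0 < w t) (t : ℝ) : x t ≤ b := by
  obtain ⟨t₀, ht₀⟩ := exists_forall_le_of_periodic hT hper
    (continuous_iff_continuousAt.2 fun t => (hx t).continuousAt)
  refine (ht₀ t).trans (le_of_not_gt fun hb => ?_)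
  have hmax : IsLocalMax x t₀ := .of_forall ht₀
  have hv₀ : v t₀ = 0 := hmax.hasDerivAt_eq_zero (hx t₀)
  have hw₀ : 0 < w t₀ := h t₀ hb hv₀
  have hmin : IsLocalMax (fun t => -x t) t₀ := isLocalMax_of_hasDerivAt_of_neg
    (.of_forall fun t => (hx t).neg) (hv t₀).neg (neg_eq_zero.2 hv₀) (neg_neg_of_pos hw₀)
  have hconst : x =ᶠ[𝓝 t₀] fun _ => x t₀ :=
    hmin.mono fun s hs => (ht₀ s).antisymm (neg_le_neg_iff.1 hs)
  have hv_zero : v =ᶠ[𝓝 t₀] fun _ => 0 := hconst.eventuallyEq_nhds.mono fun s hs =>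
    (hx s).unique ((hasDerivAt_const s (x t₀)).congr_of_eventuallyEq hs)
  exact hw₀.ne' ((hv t₀).unique ((hasDerivAt_const t₀ 0).congr_of_eventuallyEq hv_zero))

lemma mem_Icc_of_periodic_of_second_deriv (hT : 0 < T) (hper : Periodic x T)
    (hx : ∀ t, HasDerivAt x (v t) t) (hv : ∀ t, HasDerivAt v (w t) t)
    (ha : ∀ t, x t < a → v t = 0 → w t < 0) (hb : ∀ t, b < x t → v t = 0 → 0 < w t) (t : ℝ) :
    x t ∈ Icc a b := by
  refine ⟨neg_le_neg_iff.1 ?_, le_of_periodic_of_second_deriv_pos hT hper hx hv hb t⟩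
  exact le_of_periodic_of_second_deriv_pos hT (hper.comp Neg.neg) (fun t => (hx t).neg)
    (fun t => (hv t).neg)
    (fun t ht hvt => neg_pos.2 (ha t (neg_lt_neg_iff.1 ht) (neg_eq_zero.1 hvt))) t

end MaximumPrinciple

section BoundaryForce

open Filter Topology

variable {ι : Type*} {F : ℝ → (ι → ℝ) → (ι → ℝ) → ι → ℝ} {a b : ι → ℝ}

lemma mem_closure_face (hab : ∀ i, a i < b i) {x : ι → ℝ} (hx : x ∈ Icc a b) (i : ι) :
    x ∈ closure {y | y i = x i ∧ ∀ j ≠ i, y j ∈ Ioo (a j) (b j)} := by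
  classical
  let s := Function.update (fun j => Ioo (a j) (b j)) i {x i}
  have hface : {y | y i = x i ∧ ∀ j ≠ i, y j ∈ Ioo (a j) (b j)} = univ.pi s := by
    ext y
    simp only [s, mem_univ_pi, Function.forall_update_iff _ fun j t => y j ∈ t,
      mem_singleton_iff, mem_ofPred_eq]
  rw [hface, closure_pi_set, mem_univ_pi]
  intro j
  rcases eq_or_ne j i with rfl | hj
  · exact subset_closure (by simp [s])
  · simpa only [s, Function.update_of_ne hj, closure_Ioo (hab j).ne] using ⟨hx.1 j, hx.2 j⟩

variable [Fintype ι]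

/-- No solution of `ẍ = F t x ẋ` that stays in the box `Icc a b` for an open set of times touches
the boundary of the box. -/
def NoInternalTangency (F : ℝ → (ι → ℝ) → (ι → ℝ) → ι → ℝ) (a b : ι → ℝ) : Prop :=
  ∀ ⦃I : Set ℝ⦄ ⦃x v : ℝ → ι → ℝ⦄, IsOpen I → IsSecondOrderSolution F x v I →
    (∀ t ∈ I, x t ∈ Icc a b) → ∀ t ∈ I, ∀ i, x t i ∈ Ioo (a i) (b i)

lemma NoInternalTangency.mem_Ioo_of_inward (h : NoInternalTangency F a b)
    (hF : LocallyLipschitz fun u : ℝ × (ι → ℝ) × (ι → ℝ) => F u.1 u.2.1 u.2.2) {t : ℝ}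
    {x v : ι → ℝ} (hx : x ∈ Icc a b) (ha : ∀ i, x i = a i → v i = 0 ∧ 0 < F t x v i)
    (hb : ∀ i, x i = b i → v i = 0 ∧ F t x v i < 0) (i : ι) : x i ∈ Ioo (a i) (b i) := by
  obtain ⟨y, u, I, hI, rfl, rfl, hsol⟩ :=
    exists_isSecondOrderSolution_of_locallyLipschitz hF t x v
  have hbox : ∀ᶠ s in 𝓝 t, ∀ i, y s i ∈ Icc (a i) (b i) := eventually_all.2 fun i =>
    eventually_mem_Icc_of_hasDerivAt
      (mem_of_superset hI fun s hs => hasDerivAt_pi.1 (hsol s hs).1 i)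
      (hasDerivAt_pi.1 (hsol t (mem_of_mem_nhds hI)).2 i) ⟨hx.1 i, hx.2 i⟩ (ha i) (hb i)
  obtain ⟨J, hJ, hJo, htJ⟩ := mem_nhds_iff.1 (inter_mem hI hbox)
  exact h hJo (fun s hs => hsol s (hJ hs).1)
    (fun s hs => ⟨fun i => ((hJ hs).2 i).1, fun i => ((hJ hs).2 i).2⟩) t htJ i

lemma NoInternalTangency.mem_Ioo_of_inward_of_face (h : NoInternalTangency F a b)
    (hF : LocallyLipschitz fun u : ℝ × (ι → ℝ) × (ι → ℝ) => F u.1 u.2.1 u.2.2) {t : ℝ}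
    {x v : ι → ℝ} {i : ι} (hxi : x i ∈ Icc (a i) (b i)) (hx : ∀ j ≠ i, x j ∈ Ioo (a j) (b j))
    (hvi : v i = 0) (ha : x i = a i → 0 < F t x v i) (hb : x i = b i → F t x v i < 0) :
    x i ∈ Ioo (a i) (b i) := by
  have hxIcc (j : ι) : x j ∈ Icc (a j) (b j) := by
    rcases eq_or_ne j i with rfl | hj
    exacts [hxi, Ioo_subset_Icc_self (hx j hj)]
  refine h.mem_Ioo_of_inward (t := t) (v := v) hF ⟨fun j => (hxIcc j).1, fun j => (hxIcc j).2⟩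
    (fun j hj => ?_) (fun j hj => ?_) i
  · rcases eq_or_ne j i with rfl | hji
    exacts [⟨hvi, ha hj⟩, ((hx j hji).1.ne' hj).elim]
  · rcases eq_or_ne j i with rfl | hji
    exacts [⟨hvi, hb hj⟩, ((hx j hji).2.ne hj).elim]

lemma continuous_force_apply {t : ℝ} {v : ι → ℝ} {i : ι}
    (hF : LocallyLipschitz fun u : ℝ × (ι → ℝ) × (ι → ℝ) => F u.1 u.2.1 u.2.2) :
    Continuous fun x => F t x v i :=
  (continuous_apply i).comp
    (hF.continuous.comp (continuous_const.prodMk (continuous_id.prodMk continuous_const)))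

lemma NoInternalTangency.nonneg_of_eq_right (h : NoInternalTangency F a b)
    (hF : LocallyLipschitz fun u : ℝ × (ι → ℝ) × (ι → ℝ) => F u.1 u.2.1 u.2.2)
    (hab : ∀ i, a i < b i) {t : ℝ} {x v : ι → ℝ} {i : ι} (hx : x ∈ Icc a b) (hxi : x i = b i)
    (hvi : v i = 0) : 0 ≤ F t x v i := by
  have hclosed : IsClosed {y | 0 ≤ F t y v i} :=
    isClosed_le continuous_const (continuous_force_apply hF)
  refine closure_minimal ?_ hclosed (mem_closure_face hab hx i)
  rintro y ⟨hyi, hy⟩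
  have hyb : y i = b i := hyi.trans hxi
  change 0 ≤ F t y v i
  refine le_of_not_gt fun hneg => ?_
  exact (h.mem_Ioo_of_inward_of_face hF (hyi.symm ▸ ⟨hx.1 i, hx.2 i⟩) hy hvi
    (fun hya => ((hab i).ne (hya.symm.trans hyb)).elim) fun _ => hneg).2.ne hyb

lemma NoInternalTangency.nonpos_of_eq_left (h : NoInternalTangency F a b)
    (hF : LocallyLipschitz fun u : ℝ × (ι → ℝ) × (ι → ℝ) => F u.1 u.2.1 u.2.2)
    (hab : ∀ i, a i < b i) {t : ℝ} {x v : ι → ℝ} {i : ι} (hx : x ∈ Icc a b) (hxi : x i = a i)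
    (hvi : v i = 0) : F t x v i ≤ 0 := by
  have hclosed : IsClosed {y | F t y v i ≤ 0} :=
    isClosed_le (continuous_force_apply hF) continuous_const
  refine closure_minimal ?_ hclosed (mem_closure_face hab hx i)
  rintro y ⟨hyi, hy⟩
  have hya : y i = a i := hyi.trans hxi
  change F t y v i ≤ 0
  refine le_of_not_gt fun hpos => ?_
  exact (h.mem_Ioo_of_inward_of_face hF (hyi.symm ▸ ⟨hx.1 i, hx.2 i⟩) hy hvi (fun _ => hpos)
    fun hyb => ((hab i).ne (hya.symm.trans hyb)).elim).1.ne' hya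

end BoundaryForce

section Clamp

/-- The point of the order interval `Icc a b` closest to `x`; in `ι → ℝ` it truncates each
coordinate. -/
def clamp {α : Type*} [Lattice α] (a b x : α) : α := (x ⊓ b) ⊔ a

lemma clamp_mem_Icc {α : Type*} [Lattice α] {a b : α} (hab : a ≤ b) (x : α) :
    clamp a b x ∈ Icc a b :=
  ⟨le_sup_right, sup_le inf_le_right hab⟩

lemma clamp_eq_self {α : Type*} [Lattice α] {a b x : α} (hx : x ∈ Icc a b) : clamp a b x = x := by
  rw [clamp, inf_eq_left.2 hx.2, sup_eq_left.2 hx.1]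

lemma clamp_eq_right {α : Type*} [Lattice α] {a b x : α} (hab : a ≤ b) (hx : b ≤ x) :
    clamp a b x = b := by
  rw [clamp, inf_eq_right.2 hx, sup_eq_left.2 hab]

lemma clamp_eq_left {α : Type*} [Lattice α] {a b x : α} (hx : x ≤ a) : clamp a b x = a :=
  sup_eq_right.2 (inf_le_left.trans hx)

lemma lipschitzWith_clamp {ι : Type*} [Fintype ι] (a b : ι → ℝ) : LipschitzWith 1 (clamp a b) :=
  LipschitzWith.of_dist_le_mul fun x y => (dist_pi_le_iff (by positivity)).2 fun i =>
    (((LipschitzWith.id.min_const (b i)).max_const (a i)).dist_le_mul (x i) (y i)).trans <| by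
      gcongr
      exact dist_le_pi_dist x y i

end Clamp

section Truncation

open Function

open scoped NNReal

lemma exists_lipschitzOnWith_norm_le_of_periodic {X Y : Type*} [PseudoMetricSpace X]
    [SeminormedAddCommGroup Y] {U : ℝ → X → Y} {T : ℝ} {s : Set X} (hT : 0 < T)
    (hper : Periodic U T) (hU : LocallyLipschitz (uncurry U)) (hs : IsCompact s) :
    ∃ K L : ℝ≥0, ∀ t, LipschitzOnWith K (U t) s ∧ ∀ x ∈ s, ‖U t x‖ ≤ L := by
  have hcompact : IsCompact (Icc 0 T ×ˢ s) := isCompact_Icc.prod hs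
  obtain ⟨K, hK⟩ :=
    (hU.locallyLipschitzOn (s := Icc 0 T ×ˢ s)).exists_lipschitzOnWith_of_compact hcompact
  obtain ⟨L, hL⟩ := hcompact.bddAbove_image hU.continuous.nnnorm.continuousOn
  refine ⟨K, L, fun t => ?_⟩
  obtain ⟨t', ht', htt'⟩ := hper.exists_mem_Ico₀ hT t
  have ht' := Ico_subset_Icc_self ht'
  rw [htt']
  refine ⟨?_, fun x hx => hL (mem_image_of_mem _ (mk_mem_prod ht' hx))⟩
  simpa [Function.comp_def] using hK.comp
    ((LipschitzWith.const t').prodMk LipschitzWith.id).lipschitzOnWith fun x hx => ⟨ht', hx⟩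

variable {ι : Type*} {F : ℝ → (ι → ℝ) → (ι → ℝ) → ι → ℝ} {T : ℝ} {a b M : ι → ℝ}

/-- The bounded nonlinearity `g` of the modified system `ẍ = x + g t x ẋ`, which agrees with
`ẍ = F t x ẋ` while `x ∈ Icc a b` and `ẋ ∈ Icc (-M) M`. -/
def truncatedForce (F : ℝ → (ι → ℝ) → (ι → ℝ) → ι → ℝ) (a b M : ι → ℝ) (t : ℝ) (x v : ι → ℝ) :
    ι → ℝ :=
  F t (clamp a b x) (clamp (-M) M v) - clamp a b x

/-- The force decelerates every coordinate whose velocity reaches its bound `±M i` while the state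
lies in `Icc a b × Icc (-M) M`. -/
def IsVelocityBarrier (F : ℝ → (ι → ℝ) → (ι → ℝ) → ι → ℝ) (a b M : ι → ℝ) : Prop :=
  ∀ t, ∀ x ∈ Icc a b, ∀ v ∈ Icc (-M) M, ∀ i,
    (v i = M i → F t x v i < 0) ∧ (v i = -M i → 0 < F t x v i)

variable [Fintype ι]

lemma exists_periodic_isSecondOrderSolution_truncatedForce
    (hF : LocallyLipschitz fun u : ℝ × (ι → ℝ) × (ι → ℝ) => F u.1 u.2.1 u.2.2) (hT : 0 < T)
    (hper : Periodic F T) (hab : a ≤ b) (hM : 0 ≤ M) :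
    ∃ x v : ℝ → ι → ℝ, Periodic x T ∧ Periodic v T ∧
      IsSecondOrderSolution (fun t x v => x + truncatedForce F a b M t x v) x v univ := by
  let U : ℝ → (ι → ℝ) × (ι → ℝ) → ι → ℝ := fun t z => F t z.1 z.2 - z.1
  have hU : LocallyLipschitz (uncurry U) := hF.sub
    (LipschitzWith.prod_fst.comp LipschitzWith.prod_snd).locallyLipschitz
  let c : (ι → ℝ) × (ι → ℝ) → (ι → ℝ) × (ι → ℝ) :=
    fun z => (clamp a b z.1, clamp (-M) M z.2)
  have hc : LipschitzWith 1 c := by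
    have h := ((lipschitzWith_clamp a b).comp LipschitzWith.prod_fst).prodMk
      ((lipschitzWith_clamp (-M) M).comp LipschitzWith.prod_snd)
    rwa [mul_one, max_self] at h
  have hmem (z) : c z ∈ Icc a b ×ˢ Icc (-M) M :=
    ⟨clamp_mem_Icc hab _, clamp_mem_Icc (neg_le_self hM) _⟩
  obtain ⟨K, L, hKL⟩ := exists_lipschitzOnWith_norm_le_of_periodic hT
    (fun t => by simp only [U, hper t]) hU
    ((isCompact_Icc (a := a) (b := b)).prod (isCompact_Icc (a := -M) (b := M)))
  refine exists_periodic_isSecondOrderSolution_add (K := K * 1) (L := L) hT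
    (fun t => by funext x v; simp only [truncatedForce, hper t]) ?_ (fun t => ?_)
    fun t x v => (hKL t).2 _ (hmem (x, v))
  · have h : Continuous fun u : ℝ × (ι → ℝ) × (ι → ℝ) => uncurry U (u.1, c u.2) :=
      hU.continuous.comp (continuous_fst.prodMk (hc.continuous.comp continuous_snd))
    exact h
  · have h : LipschitzOnWith (K * 1) (U t ∘ c) univ :=
      (hKL t).1.comp hc.lipschitzOnWith fun z _ => hmem z
    exact lipschitzOnWith_univ.1 h

lemma mem_Icc_of_isSecondOrderSolution_truncatedForce {x v : ℝ → ι → ℝ}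
    (hF : LocallyLipschitz fun u : ℝ × (ι → ℝ) × (ι → ℝ) => F u.1 u.2.1 u.2.2) (hT : 0 < T)
    (hab : ∀ i, a i < b i) (hM : 0 ≤ M) (htangent : NoInternalTangency F a b)
    (hx : Periodic x T)
    (hsol : IsSecondOrderSolution (fun t x v => x + truncatedForce F a b M t x v) x v univ)
    (t : ℝ) : x t ∈ Icc a b := by
  have hclamp (t) : clamp a b (x t) ∈ Icc a b := clamp_mem_Icc (fun i => (hab i).le) _
  have hzero {t : ℝ} {i : ι} (h : v t i = 0) : clamp (-M) M (v t) i = 0 := by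
    change clamp (-M i) (M i) (v t i) = 0
    rw [h, clamp_eq_self ⟨neg_nonpos.2 (hM i), hM i⟩]
  have hbox (i : ι) : x t i ∈ Icc (a i) (b i) := by
    refine mem_Icc_of_periodic_of_second_deriv hT (x := fun s => x s i)
      (fun s => congrFun (hx s) i)
      (fun t => hasDerivAt_pi.1 (hsol t (mem_univ t)).1 i)
      (fun t => hasDerivAt_pi.1 (hsol t (mem_univ t)).2 i) (fun s hs hv => ?_) (fun s hs hv => ?_) t
    · have hleft : clamp a b (x s) i = a i := clamp_eq_left hs.le
      have := htangent.nonpos_of_eq_left hF hab (t := s) (hclamp s) hleft (hzero hv)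
      simp only [truncatedForce, Pi.add_apply, Pi.sub_apply, hleft]
      linarith
    · have hright : clamp a b (x s) i = b i := clamp_eq_right (hab i).le hs.le
      have := htangent.nonneg_of_eq_right hF hab (t := s) (hclamp s) hright (hzero hv)
      simp only [truncatedForce, Pi.add_apply, Pi.sub_apply, hright]
      linarith
  exact ⟨fun i => (hbox i).1, fun i => (hbox i).2⟩

lemma velocity_mem_Icc_of_isSecondOrderSolution_truncatedForce {x v : ℝ → ι → ℝ} (hT : 0 < T)
    (hM : 0 ≤ M) (hbarrier : IsVelocityBarrier F a b M) (hv : Periodic v T)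
    (hsol : IsSecondOrderSolution (fun t x v => x + truncatedForce F a b M t x v) x v univ)
    (hx : ∀ t, x t ∈ Icc a b) (t : ℝ) : v t ∈ Icc (-M) M := by
  have hM' : -M ≤ M := neg_le_self hM
  have hbound (i : ι) : v t i ∈ Icc (-M i) (M i) := by
    refine mem_Icc_of_periodic_of_deriv_ne_zero hT (v := fun s => v s i)
      (fun s => congrFun (hv s) i)
      (fun t => hasDerivAt_pi.1 (hsol t (mem_univ t)).2 i) (fun s hs => ?_) t
    have hforce := hbarrier s (x s) (hx s) _ (clamp_mem_Icc hM' (v s)) i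
    simp only [truncatedForce, clamp_eq_self (hx s), add_sub_cancel]
    rcases lt_or_ge (v s i) (-M i) with hlt | hge
    · exact (hforce.2 (clamp_eq_left hlt.le)).ne'
    · have hgt : M i < v s i := not_le.1 fun hle => hs ⟨hge, hle⟩
      exact (hforce.1 (clamp_eq_right (hM' i) hgt.le)).ne
  exact ⟨fun i => (hbound i).1, fun i => (hbound i).2⟩

theorem exists_periodic_isSecondOrderSolution_mem_Ioo
    (hF : LocallyLipschitz fun u : ℝ × (ι → ℝ) × (ι → ℝ) => F u.1 u.2.1 u.2.2) (hT : 0 < T)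
    (hper : Periodic F T) (hab : ∀ i, a i < b i) (hM : 0 ≤ M)
    (hbarrier : IsVelocityBarrier F a b M) (htangent : NoInternalTangency F a b) :
    ∃ x v : ℝ → ι → ℝ, IsSecondOrderSolution F x v univ ∧ Periodic x T ∧ Periodic v T ∧
      ∀ t i, x t i ∈ Ioo (a i) (b i) := by
  obtain ⟨x, v, hx, hv, hsol⟩ := exists_periodic_isSecondOrderSolution_truncatedForce hF hT hper
    (fun i => (hab i).le) hM
  have hbox :=
    mem_Icc_of_isSecondOrderSolution_truncatedForce hF hT hab hM htangent hx hsol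
  have hvel :=
    velocity_mem_Icc_of_isSecondOrderSolution_truncatedForce hT hM hbarrier hv hsol hbox
  have hsolF : IsSecondOrderSolution F x v univ := fun t ht => by
    simpa only [truncatedForce, clamp_eq_self (hbox t), clamp_eq_self (hvel t), add_sub_cancel]
      using hsol t ht
  exact ⟨x, v, hsolF, hx, hv,
    fun t => htangent isOpen_univ hsolF (fun t _ => hbox t) t (mem_univ t)⟩

end Truncation

section Friction

open Filter Function

lemma exists_pos_friction_lt_neg_of_periodic {φ : ℝ → ℝ → ℝ → ℝ} {T d c : ℝ} {s : Set ℝ}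
    (hT : 0 < T) (hper : Periodic φ T) (hc : c < 0)
    (hφ : ∀ t ∈ Icc 0 T, ∀ q ∈ s, ∀ p, d < p ^ 2 → φ t q p * p / p ^ 2 ≤ c) (C : ℝ) :
    ∃ M > 0, ∀ t, ∀ q ∈ s, φ t q M < -C ∧ C < φ t q (-M) := by
  have hlarge : ∀ᶠ M : ℝ in atTop, 0 < M ∧ d < M ^ 2 ∧ c * M < -C :=
    (eventually_gt_atTop 0).and (((tendsto_pow_atTop two_ne_zero).eventually_gt_atTop d).and
      ((tendsto_id.const_mul_atTop_of_neg hc).eventually_lt_atBot (-C)))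
  obtain ⟨M, hM, hdM, hcM⟩ := hlarge.exists
  refine ⟨M, hM, fun t q hq => ?_⟩
  obtain ⟨t', ht', htt'⟩ := hper.exists_mem_Ico₀ hT t
  rw [htt']
  have hplus : φ t' q M ≤ c * M := by
    have h := hφ t' (Ico_subset_Icc_self ht') q hq M hdM
    rwa [sq, mul_div_mul_right _ _ hM.ne', div_le_iff₀ hM] at h
  have hminus : -φ t' q (-M) ≤ c * M := by
    have h := hφ t' (Ico_subset_Icc_self ht') q hq (-M) (by rwa [neg_sq])
    rwa [sq, mul_div_mul_right _ _ (neg_ne_zero.2 hM.ne'), div_neg, ← neg_div,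
      div_le_iff₀ hM] at h
  exact ⟨hplus.trans_lt hcM, by linarith⟩

end Friction

section ForcedSystem

open Function

variable {ι : Type*} {f ffr : ι → ℝ → ℝ → ℝ → ℝ}
  {fint : ι → ℝ → (ι → ℝ) → (ι → ℝ) → ℝ} {T : ℝ} {a b : ι → ℝ}

/-- The right-hand side of the system: in the `i`-th coordinate, the external force `f i`, the
friction `ffr i` and the interaction `fint i`. -/
def totalForce (f ffr : ι → ℝ → ℝ → ℝ → ℝ) (fint : ι → ℝ → (ι → ℝ) → (ι → ℝ) → ℝ) (t : ℝ)
    (x v : ι → ℝ) : ι → ℝ :=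
  fun i => f i t (x i) (v i) + ffr i t (x i) (v i) + fint i t x v

lemma periodic_totalForce (hf : ∀ i, Periodic (f i) T) (hffr : ∀ i, Periodic (ffr i) T)
    (hfint : ∀ i, Periodic (fint i) T) : Periodic (totalForce f ffr fint) T := fun t => by
  funext x v i
  simp only [totalForce, hf i t, hffr i t, hfint i t]

lemma exists_isVelocityBarrier_totalForce (hT : 0 < T) (hffr_per : ∀ i, Periodic (ffr i) T)
    (hf : ∀ i, ∃ C, ∀ t, ∀ q ∈ Icc (a i) (b i), ∀ p, |f i t q p| ≤ C)
    (hfint : ∀ i, ∃ C, ∀ t, ∀ x ∈ Icc a b, ∀ v, |fint i t x v| ≤ C)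
    (hffr : ∀ i, ∃ d, ∃ c < 0, ∀ t ∈ Icc 0 T, ∀ q ∈ Icc (a i) (b i), ∀ p,
      d < p ^ 2 → ffr i t q p * p / p ^ 2 ≤ c) :
    ∃ M, 0 ≤ M ∧ IsVelocityBarrier (totalForce f ffr fint) a b M := by
  choose Cf hCf using hf
  choose Cint hCint using hfint
  choose d c hc hfric using hffr
  choose M hM hfricM using fun i =>
    exists_pos_friction_lt_neg_of_periodic hT (hffr_per i) (hc i) (hfric i) (Cf i + Cint i)
  refine ⟨M, fun i => (hM i).le, fun t x hx v _ i => ?_⟩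
  have hxi : x i ∈ Icc (a i) (b i) := ⟨hx.1 i, hx.2 i⟩
  have hf := abs_le.1 (hCf i t (x i) hxi (v i))
  have hint := abs_le.1 (hCint i t x hx v)
  have hfric := hfricM i t (x i) hxi
  simp only [totalForce]
  constructor <;> intro hvi <;> rw [hvi] at hf ⊢ <;> linarith

variable [Fintype ι]

lemma locallyLipschitz_pi {X : Type*} [PseudoEMetricSpace X] {Y : ι → Type*}
    [∀ i, PseudoEMetricSpace (Y i)] {g : X → ∀ i, Y i}
    (hg : ∀ i, LocallyLipschitz fun x => g x i) : LocallyLipschitz g := fun x => by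
  choose K U hU hK using fun i => hg i x
  refine ⟨Finset.univ.sup K, ⋂ i, U i, Filter.iInter_mem.2 hU, fun y hy z hz => ?_⟩
  refine edist_pi_le_iff.2 fun i =>
    (hK i (mem_iInter.1 hy i) (mem_iInter.1 hz i)).trans ?_
  gcongr
  exact Finset.le_sup (Finset.mem_univ i)

lemma locallyLipschitz_totalForce
    (hf : ∀ i, LocallyLipschitz fun u : ℝ × ℝ × ℝ => f i u.1 u.2.1 u.2.2)
    (hffr : ∀ i, LocallyLipschitz fun u : ℝ × ℝ × ℝ => ffr i u.1 u.2.1 u.2.2)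
    (hfint : ∀ i, LocallyLipschitz fun u : ℝ × (ι → ℝ) × (ι → ℝ) => fint i u.1 u.2.1 u.2.2) :
    LocallyLipschitz fun u : ℝ × (ι → ℝ) × (ι → ℝ) => totalForce f ffr fint u.1 u.2.1 u.2.2 := by
  refine locallyLipschitz_pi fun i => ?_
  have hproj : LocallyLipschitz fun u : ℝ × (ι → ℝ) × (ι → ℝ) => (u.1, u.2.1 i, u.2.2 i) :=
    (LipschitzWith.prod_fst.prodMk
      ((((LipschitzWith.eval i).comp LipschitzWith.prod_fst).prodMk
        ((LipschitzWith.eval i).comp LipschitzWith.prod_snd)).comp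
          LipschitzWith.prod_snd)).locallyLipschitz
  exact (((hf i).comp hproj).add ((hffr i).comp hproj)).add (hfint i)

theorem forced_oscillations_interval_blocks_general (hT : 0 < T) (hab : ∀ i, a i < b i)
    (hf_lip : ∀ i, LocallyLipschitz fun u : ℝ × ℝ × ℝ => f i u.1 u.2.1 u.2.2)
    (hffr_lip : ∀ i, LocallyLipschitz fun u : ℝ × ℝ × ℝ => ffr i u.1 u.2.1 u.2.2)
    (hfint_lip : ∀ i,
      LocallyLipschitz fun u : ℝ × (ι → ℝ) × (ι → ℝ) => fint i u.1 u.2.1 u.2.2)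
    (hf_per : ∀ i, Periodic (f i) T) (hffr_per : ∀ i, Periodic (ffr i) T)
    (hfint_per : ∀ i, Periodic (fint i) T)
    (hf_bdd : ∀ i, ∃ C, ∀ t, ∀ q ∈ Icc (a i) (b i), ∀ p, |f i t q p| ≤ C)
    (hfint_bdd : ∀ i, ∃ C, ∀ t, ∀ x ∈ Icc a b, ∀ v, |fint i t x v| ≤ C)
    (hfr : ∀ i, ∃ d, ∃ c < 0, ∀ t ∈ Icc 0 T, ∀ q ∈ Icc (a i) (b i), ∀ p,
      d < p ^ 2 → ffr i t q p * p / p ^ 2 ≤ c)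
    (htangent : NoInternalTangency (totalForce f ffr fint) a b) :
    ∃ x v : ℝ → ι → ℝ, IsSecondOrderSolution (totalForce f ffr fint) x v univ ∧
      Periodic x T ∧ Periodic v T ∧ ∀ t i, x t i ∈ Ioo (a i) (b i) := by
  obtain ⟨M, hM, hbarrier⟩ :=
    exists_isVelocityBarrier_totalForce hT hffr_per hf_bdd hfint_bdd hfr
  exact exists_periodic_isSecondOrderSolution_mem_Ioo
    (locallyLipschitz_totalForce hf_lip hffr_lip hfint_lip) hT
    (periodic_totalForce hf_per hffr_per hfint_per) hab hM hbarrier htangent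

end ForcedSystem

section Exit

open Filter Topology

lemma hasDerivAt_eq_zero_of_eventually_mem_Icc {x : ℝ → ℝ} {v t a b : ℝ}
    (hx : HasDerivAt x v t) (hbox : ∀ᶠ s in 𝓝 t, x s ∈ Icc a b) (ht : x t = a ∨ x t = b) :
    v = 0 := by
  rcases ht with rfl | rfl
  · exact IsLocalMin.hasDerivAt_eq_zero (hbox.mono fun _ hs => hs.1) hx
  · exact IsLocalMax.hasDerivAt_eq_zero (hbox.mono fun _ hs => hs.2) hx

lemma NoInternalTangency.of_exists_notMem {ι : Type*} [Fintype ι]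
    {F : ℝ → (ι → ℝ) → (ι → ℝ) → ι → ℝ} {a b : ι → ℝ}
    (h : ∀ ⦃I : Set ℝ⦄ ⦃x v : ℝ → ι → ℝ⦄, IsOpen I → IsSecondOrderSolution F x v I → ∀ t ∈ I,
      x t ∈ Icc a b → (∃ i, x t i = a i ∨ x t i = b i) →
      (∀ i, x t i = a i ∨ x t i = b i → v t i = 0) → ∃ s ∈ I, x s ∉ Icc a b) :
    NoInternalTangency F a b := by
  intro I x v hI hsol hbox t ht i
  by_contra hi
  have hbdry : x t i = a i ∨ x t i = b i := by
    by_contra! hne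
    exact hi ⟨((hbox t ht).1 i).lt_of_ne' hne.1, ((hbox t ht).2 i).lt_of_ne hne.2⟩
  obtain ⟨s, hs, hxs⟩ := h hI hsol t ht (hbox t ht) ⟨i, hbdry⟩ fun j =>
    hasDerivAt_eq_zero_of_eventually_mem_Icc (hasDerivAt_pi.1 (hsol t ht).1 j)
      (mem_of_superset (hI.mem_nhds ht) fun s hs => ⟨(hbox s hs).1 j, (hbox s hs).2 j⟩)
  exact hxs (hbox s hs)

variable {n : ℕ} {f ffr : Fin n → ℝ → ℝ → ℝ → ℝ}
  {fint : Fin n → ℝ → (Fin n → ℝ) → (Fin n → ℝ) → ℝ}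

lemma isSolution0_iff {x v : ℝ → Fin n → ℝ} {I : Set ℝ} :
    IsSolution0 n f ffr fint x v I ↔ IsSecondOrderSolution (totalForce f ffr fint) x v I := by
  simp only [IsSolution0, IsSecondOrderSolution, hasDerivAt_pi, forall_and, totalForce]

lemma noInternalTangency_totalForce_of_exit {a b : Fin n → ℝ}
    (hexit : ∀ t₀ : ℝ, ∀ x0 v0 : Fin n → ℝ,
      (∀ j, x0 j ∈ Icc (a j) (b j)) →
      (∃ i, x0 i = a i ∨ x0 i = b i) →
      (∀ i, (x0 i = a i ∨ x0 i = b i) → v0 i = 0) →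
      ∀ (I : Set ℝ) (x v : ℝ → Fin n → ℝ), IsOpen I → t₀ ∈ I →
        IsSolution0 n f ffr fint x v I → x t₀ = x0 → v t₀ = v0 →
        ∃ ε > (0 : ℝ), ∀ t ∈ Ioo t₀ (t₀ + ε), t ∈ I →
          ¬ (∀ j, x t j ∈ Icc (a j) (b j))) :
    NoInternalTangency (totalForce f ffr fint) a b := by
  refine .of_exists_notMem fun I x v hI hsol t ht hx hbdry hvel => ?_
  obtain ⟨ε, hε, hout⟩ := hexit t (x t) (v t) (fun j => ⟨hx.1 j, hx.2 j⟩) hbdry hvel I x v hI ht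
    (isSolution0_iff.2 hsol) rfl rfl
  obtain ⟨s, hs, hsI⟩ := Filter.nonempty_of_mem
    (inter_mem (Ioo_mem_nhdsGT (lt_add_of_pos_right t hε))
      (mem_nhdsWithin_of_mem_nhds (hI.mem_nhds ht)))
  exact ⟨s, hsI, fun hxs => hout s hs hsI fun j => ⟨hxs.1 j, hxs.2 j⟩⟩

end Exit

theorem forced_oscillations_interval_blocks
    (n : ℕ) (hn : 1 ≤ n) (T : ℝ) (hT : 0 < T)
    (a b : Fin n → ℝ) (hab : ∀ i, a i < b i)
    (f ffr : Fin n → ℝ → ℝ → ℝ → ℝ)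
    (fint : Fin n → ℝ → (Fin n → ℝ) → (Fin n → ℝ) → ℝ)
    (hf_smooth : ∀ i, ContDiff ℝ (⊤ : ℕ∞) (fun u : ℝ × ℝ × ℝ => f i u.1 u.2.1 u.2.2))
    (hffr_smooth : ∀ i, ContDiff ℝ (⊤ : ℕ∞) (fun u : ℝ × ℝ × ℝ => ffr i u.1 u.2.1 u.2.2))
    (hfint_smooth : ∀ i, ContDiff ℝ (⊤ : ℕ∞)
      (fun u : ℝ × (Fin n → ℝ) × (Fin n → ℝ) => fint i u.1 u.2.1 u.2.2))
    (hf_per : ∀ i t q p, f i (t + T) q p = f i t q p)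
    (hffr_per : ∀ i t q p, ffr i (t + T) q p = ffr i t q p)
    (hfint_per : ∀ i t q p, fint i (t + T) q p = fint i t q p)
    -- (1) boundedness of the external and interaction forces
    (hf_bdd : ∀ i, ∃ C : ℝ, ∀ t q p, |f i t q p| ≤ C)
    (hfint_bdd : ∀ i, ∃ C : ℝ, ∀ t q p, |fint i t q p| ≤ C)
    -- (2) friction condition (H1):
    -- sup { ffrᵢ(t,q,p)·p/p² : t ∈ [0,T], q ∈ [aᵢ,bᵢ], p² > dᵢ } < 0
    (hfr : ∀ i, ∃ d > (0 : ℝ), ∃ c < (0 : ℝ), ∀ t ∈ Icc (0 : ℝ) T,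
      ∀ q ∈ Icc (a i) (b i), ∀ p : ℝ, d < p ^ 2 → ffr i t q p * p / p ^ 2 ≤ c)
    -- (3) solutions starting on the boundary of the box (tangentially) leave it immediately
    (hexit : ∀ t₀ : ℝ, ∀ x0 v0 : Fin n → ℝ,
      (∀ j, x0 j ∈ Icc (a j) (b j)) →
      (∃ i, x0 i = a i ∨ x0 i = b i) →
      (∀ i, (x0 i = a i ∨ x0 i = b i) → v0 i = 0) →
      ∀ (I : Set ℝ) (x v : ℝ → Fin n → ℝ), IsOpen I → t₀ ∈ I →
        IsSolution0 n f ffr fint x v I → x t₀ = x0 → v t₀ = v0 →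
        ∃ ε > (0 : ℝ), ∀ t ∈ Ioo t₀ (t₀ + ε), t ∈ I →
          ¬ (∀ j, x t j ∈ Icc (a j) (b j))) :
    -- conclusion: a T-periodic solution staying strictly inside the box
    ∃ x v : ℝ → Fin n → ℝ,
      IsSolution0 n f ffr fint x v univ ∧
      (∀ t i, x (t + T) i = x t i) ∧
      (∀ t i, v (t + T) i = v t i) ∧
      (∀ t i, x t i ∈ Ioo (a i) (b i)) := by
  have hsmooth : (1 : WithTop ℕ∞) ≤ (⊤ : ℕ∞) := by exact_mod_cast le_top
  obtain ⟨x, v, hsol, hx, hv, hbox⟩ := forced_oscillations_interval_blocks_general hT hab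
    (fun i => ((hf_smooth i).of_le hsmooth).locallyLipschitz)
    (fun i => ((hffr_smooth i).of_le hsmooth).locallyLipschitz)
    (fun i => ((hfint_smooth i).of_le hsmooth).locallyLipschitz)
    (fun i t => funext₂ (hf_per i t)) (fun i t => funext₂ (hffr_per i t))
    (fun i t => funext₂ (hfint_per i t))
    (fun i => (hf_bdd i).imp fun _ hC t q _ p => hC t q p)
    (fun i => (hfint_bdd i).imp fun _ hC t q _ p => hC t q p)
    (fun i => (hfr i).imp fun _ hd => hd.2) (noInternalTangency_totalForce_of_exit hexit)
  exact ⟨x, v, isSolution0_iff.2 hsol, fun t => congrFun (hx t), fun t => congrFun (hv t), hbox⟩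
end

section
/- Suppose that f and g are bounded and that there exists d > 0 such that sup{ ⟨h(t, q, p), p⟩ / ⟨p, p⟩ : t ∈ [0,T], q ∈ K, ⟨p, p⟩ > d } < 0. Then there exists c > 0 with the following property: for every solution (q, p) : I → E × E of the system q̇ = p, ṗ = f(t, q, p) + h(t, q, p) + g(t, q, p), and every time t ∈ I ∩ [0, T] at which q(t) ∈ K and ‖p(t)‖² = c, the derivative at t of the function s ↦ ‖p(s)‖² is strictly negative. -/
open Set
open scoped RealInnerProductSpace

/-- `(q, p)` is a solution of `q̇ = p`, `ṗ = f(t,q,p) + h(t,q,p) + g(t,q,p)` on `I ⊆ ℝ`. -/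
def IsSolution2 {E : Type*} [NormedAddCommGroup E] [InnerProductSpace ℝ E]
    (f h g : ℝ → E → E → E) (q p : ℝ → E) (I : Set ℝ) : Prop :=
  ∀ t ∈ I,
    HasDerivAt q (p t) t ∧
    HasDerivAt p (f t (q t) (p t) + h t (q t) (p t) + g t (q t) (p t)) t

/-!
Along a solution, `d/dt ‖p‖² = 2⟪p, f + h + g⟫`. The bounded forces `f` and `g` contribute at most a
multiple of `‖p‖`, whereas the friction `h` contributes at most a negative multiple of `‖p‖²`.
On a level set `‖p‖² = c` with `c` large, the quadratic term wins.
-/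

section

variable {E : Type*} [NormedAddCommGroup E] [InnerProductSpace ℝ E]

theorem inner_add_neg_of_norm_le_of_inner_le {v w p : E} {C b : ℝ} (hv : ‖v‖ ≤ C)
    (hw : ⟪w, p⟫ ≤ b * ‖p‖ ^ 2) (hbC : b * ‖p‖ < -C) : ⟪v + w, p⟫ < 0 := by
  have hp : 0 < ‖p‖ := by
    refine (norm_nonneg p).lt_of_ne' fun hp => ?_
    rw [hp, mul_zero, neg_pos] at hbC
    exact hbC.not_ge ((norm_nonneg v).trans hv)
  calc
    ⟪v + w, p⟫ = ⟪v, p⟫ + ⟪w, p⟫ := inner_add_left v w p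
    _ ≤ C * ‖p‖ + b * ‖p‖ ^ 2 :=
      add_le_add ((real_inner_le_norm v p).trans (by gcongr)) hw
    _ = (b * ‖p‖ + C) * ‖p‖ := by ring
    _ < 0 := mul_neg_of_neg_of_pos (lt_neg_iff_add_neg.mp hbC) hp

namespace IsSolution2

variable {f h g : ℝ → E → E → E} {q p : ℝ → E} {I : Set ℝ} {t : ℝ}

theorem hasDerivAt_norm_sq (hqp : IsSolution2 f h g q p I) (ht : t ∈ I) :
    HasDerivAt (fun s => ‖p s‖ ^ 2)
      (2 * ⟪f t (q t) (p t) + g t (q t) (p t) + h t (q t) (p t), p t⟫) t := by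
  rw [add_right_comm, real_inner_comm]
  exact (hqp t ht).2.norm_sq

theorem deriv_norm_sq_neg (hqp : IsSolution2 f h g q p I) (ht : t ∈ I) {A B b : ℝ}
    (hf : ‖f t (q t) (p t)‖ ≤ A) (hg : ‖g t (q t) (p t)‖ ≤ B)
    (hh : ⟪h t (q t) (p t), p t⟫ ≤ b * ‖p t‖ ^ 2) (hbAB : b * ‖p t‖ < -(A + B)) :
    deriv (fun s => ‖p s‖ ^ 2) t < 0 := by
  rw [(hqp.hasDerivAt_norm_sq ht).deriv]
  exact mul_neg_of_pos_of_neg two_pos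
    (inner_add_neg_of_norm_le_of_inner_le (norm_add_le_of_le hf hg) hh hbAB)

end IsSolution2

theorem kinetic_energy_decreases_on_high_level_set_general
    (J : Set ℝ) (K : Set E) (f h g : ℝ → E → E → E)
    (hf_bdd : ∃ C : ℝ, ∀ t ∈ J, ∀ q ∈ K, ∀ p, ‖f t q p‖ ≤ C)
    (hg_bdd : ∃ C : ℝ, ∀ t ∈ J, ∀ q ∈ K, ∀ p, ‖g t q p‖ ≤ C)
    (hfr : ∃ d > (0 : ℝ), ∃ c < (0 : ℝ), ∀ t ∈ J, ∀ q ∈ K,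
      ∀ p : E, d < ⟪p, p⟫ → ⟪h t q p, p⟫ / ⟪p, p⟫ ≤ c) :
    ∀ᶠ c : ℝ in Filter.atTop, ∀ (I : Set ℝ) (q p : ℝ → E),
      IsSolution2 f h g q p I →
      ∀ t ∈ I ∩ J, q t ∈ K → ‖p t‖ ^ 2 = c →
        deriv (fun s => ‖p s‖ ^ 2) t < 0 := by
  obtain ⟨A, hA⟩ := hf_bdd
  obtain ⟨B, hB⟩ := hg_bdd
  obtain ⟨d, hd, b, hb, hfr⟩ := hfr
  have friction_dominates : ∀ᶠ c : ℝ in Filter.atTop, b * √c < -(A + B) :=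
    (Real.tendsto_sqrt_atTop.const_mul_atTop_of_neg hb).eventually_lt_atBot _
  filter_upwards [friction_dominates, Filter.eventually_gt_atTop d] with c hbAB hdc
  rintro I q p hqp t ⟨htI, htJ⟩ hqK rfl
  rw [Real.sqrt_sq (norm_nonneg (p t))] at hbAB
  have friction_le : ⟪h t (q t) (p t), p t⟫ ≤ b * ‖p t‖ ^ 2 := by
    rw [← div_le_iff₀ (hd.trans hdc), ← real_inner_self_eq_norm_sq]
    exact hfr t htJ (q t) hqK (p t) (by rwa [real_inner_self_eq_norm_sq])
  exact hqp.deriv_norm_sq_neg htI (hA t htJ _ hqK _) (hB t htJ _ hqK _)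
    friction_le hbAB

end

theorem kinetic_energy_decreases_on_high_level_set
    {E : Type*} [NormedAddCommGroup E] [InnerProductSpace ℝ E] [FiniteDimensional ℝ E]
    (K : Set E) (hK : IsCompact K) (T : ℝ) (hT : 0 < T)
    (f h g : ℝ → E → E → E)
    (hf_cont : Continuous fun u : ℝ × E × E => f u.1 u.2.1 u.2.2)
    (hh_cont : Continuous fun u : ℝ × E × E => h u.1 u.2.1 u.2.2)
    (hg_cont : Continuous fun u : ℝ × E × E => g u.1 u.2.1 u.2.2)
    -- f and g are bounded
    (hf_bdd : ∃ C : ℝ, ∀ t q p, ‖f t q p‖ ≤ C)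
    (hg_bdd : ∃ C : ℝ, ∀ t q p, ‖g t q p‖ ≤ C)
    -- sup { ⟨h(t,q,p),p⟩/⟨p,p⟩ : t ∈ [0,T], q ∈ K, ⟨p,p⟩ > d } < 0
    (hfr : ∃ d > (0 : ℝ), ∃ c < (0 : ℝ), ∀ t ∈ Icc (0 : ℝ) T, ∀ q ∈ K,
      ∀ p : E, d < ⟪p, p⟫ → ⟪h t q p, p⟫ / ⟪p, p⟫ ≤ c) :
    ∃ c > (0 : ℝ), ∀ (I : Set ℝ) (q p : ℝ → E),
      IsSolution2 f h g q p I →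
      ∀ t ∈ I ∩ Icc (0 : ℝ) T, q t ∈ K → ‖p t‖ ^ 2 = c →
        deriv (fun s => ‖p s‖ ^ 2) t < 0 := by
  have eventually_decreases := kinetic_energy_decreases_on_high_level_set_general (Icc 0 T) K f h g
    (hf_bdd.imp fun _ hC t _ q _ => hC t q) (hg_bdd.imp fun _ hC t _ q _ => hC t q) hfr
  exact ((Filter.eventually_gt_atTop 0).and eventually_decreases).exists
end

section
/- Under the same hypotheses, there exists c > 0 such that the sublevel set {‖p‖² ≤ c} is forward invariant over K: for every solution (q, p) : [t₀, t₁] → E × E of the system q̇ = p, ṗ = f(t, q, p) + h(t, q, p) + g(t, q, p) with [t₀, t₁] ⊆ [0, T], if q(t) ∈ K for all t ∈ [t₀, t₁] and ‖p(t₀)‖² ≤ c, then ‖p(t)‖² ≤ c for all t ∈ [t₀, t₁]. -/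
open Set
open scoped RealInnerProductSpace

/-- `(q, p)` is a solution of `q̇ = p`, `ṗ = f(t,q,p) + h(t,q,p) + g(t,q,p)` on `I ⊆ ℝ`. -/
def IsSolution3 {E : Type*} [NormedAddCommGroup E] [InnerProductSpace ℝ E]
    (f h g : ℝ → E → E → E) (q p : ℝ → E) (I : Set ℝ) : Prop :=
  ∀ t ∈ I,
    HasDerivAt q (p t) t ∧
    HasDerivAt p (f t (q t) (p t) + h t (q t) (p t) + g t (q t) (p t)) t

/-!
Write `A`, `B` for the bounds on `f`, `g` and `k < 0` for the bound on the friction quotient. Where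
`‖p‖² > d`, half the derivative of the kinetic energy `‖p‖²` along a solution is
`⟪p, f + h + g⟫ ≤ ‖p‖ (A + B + k ‖p‖)`: friction is quadratic in `‖p‖`, while the bounded forces
contribute only linearly. So the energy decreases wherever it exceeds both `d` and `((A + B) / k)²`,
and it cannot cross any level above these two.
-/

/-- The set `S` of velocities is forward invariant over `K` for the system
`q̇ = p`, `ṗ = f(t,q,p) + h(t,q,p) + g(t,q,p)` at times in `J`: a solution on an interval
`[t₀, t₁] ⊆ J` whose position stays in `K` and whose velocity starts in `S` keeps its velocity
in `S`. -/
def ForwardInvariantOver {E : Type*} [NormedAddCommGroup E] [InnerProductSpace ℝ E]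
    (f h g : ℝ → E → E → E) (J : Set ℝ) (K S : Set E) : Prop :=
  ∀ (t₀ t₁ : ℝ) (q p : ℝ → E),
    Icc t₀ t₁ ⊆ J →
    IsSolution3 f h g q p (Icc t₀ t₁) →
    (∀ t ∈ Icc t₀ t₁, q t ∈ K) →
    p t₀ ∈ S →
    ∀ t ∈ Icc t₀ t₁, p t ∈ S

theorem image_le_of_deriv_right_neg_of_lt {u u' : ℝ → ℝ} {a b c : ℝ}
    (hu : ContinuousOn u (Icc a b))
    (hu' : ∀ t ∈ Ico a b, HasDerivWithinAt u (u' t) (Ici t) t)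
    (ha : u a ≤ c) (hneg : ∀ t ∈ Ico a b, c < u t → u' t < 0) :
    ∀ t ∈ Icc a b, u t ≤ c := by
  intro t ht
  -- The derivative has a sign only strictly above `c`, so the barriers are the levels `c' > c`.
  refine le_of_forall_gt_imp_ge_of_dense fun c' hc' ↦ ?_
  exact image_le_of_deriv_right_lt_deriv_boundary hu hu' (ha.trans hc'.le)
    (fun s ↦ hasDerivAt_const s c') (fun s hs hsc ↦ hneg s hs (hsc ▸ hc')) ht

section

variable {E : Type*} [NormedAddCommGroup E] [InnerProductSpace ℝ E]

theorem norm_sq_le_of_inner_deriv_neg_of_lt {p p' : ℝ → E} {a b c : ℝ}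
    (hp : ContinuousOn p (Icc a b))
    (hp' : ∀ t ∈ Ico a b, HasDerivWithinAt p (p' t) (Ici t) t)
    (ha : ‖p a‖ ^ 2 ≤ c) (hneg : ∀ t ∈ Ico a b, c < ‖p t‖ ^ 2 → ⟪p t, p' t⟫ < 0) :
    ∀ t ∈ Icc a b, ‖p t‖ ^ 2 ≤ c :=
  image_le_of_deriv_right_neg_of_lt (hp.norm.pow 2) (fun t ht ↦ (hp' t ht).norm_sq) ha
    fun t ht hct ↦ mul_neg_of_pos_of_neg two_pos (hneg t ht hct)

theorem inner_add_neg_of_norm_lt {p v w : E} {κ : ℝ} (hv : ‖v‖ < κ * ‖p‖)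
    (hw : ⟪w, p⟫ ≤ -κ * ‖p‖ ^ 2) : ⟪p, v + w⟫ < 0 := by
  have hp : 0 < ‖p‖ := (norm_nonneg p).lt_of_ne' fun hp ↦ by
    rw [hp, mul_zero] at hv
    exact hv.not_ge (norm_nonneg v)
  calc ⟪p, v + w⟫ = ⟪p, v⟫ + ⟪w, p⟫ := by rw [inner_add_right, real_inner_comm p w]
    _ ≤ ‖p‖ * ‖v‖ + -κ * ‖p‖ ^ 2 := add_le_add (real_inner_le_norm p v) hw
    _ = ‖p‖ * (‖v‖ - κ * ‖p‖) := by ring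
    _ < 0 := mul_neg_of_pos_of_neg hp (sub_neg.2 hv)

theorem forwardInvariantOver_norm_sq_le {f h g : ℝ → E → E → E} {J : Set ℝ} {K : Set E}
    {A B d κ c : ℝ} (hκ : 0 < κ)
    (hf : ∀ t ∈ J, ∀ q ∈ K, ∀ p, ‖f t q p‖ ≤ A)
    (hg : ∀ t ∈ J, ∀ q ∈ K, ∀ p, ‖g t q p‖ ≤ B)
    (hh : ∀ t ∈ J, ∀ q ∈ K, ∀ p, d < ‖p‖ ^ 2 → ⟪h t q p, p⟫ ≤ -κ * ‖p‖ ^ 2)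
    (hdc : d ≤ c) (hc : ((A + B) / κ) ^ 2 ≤ c) :
    ForwardInvariantOver f h g J K {p | ‖p‖ ^ 2 ≤ c} := by
  intro t₀ t₁ q p hJ hsol hqK hp₀
  refine norm_sq_le_of_inner_deriv_neg_of_lt
    (fun t ht ↦ (hsol t ht).2.continuousAt.continuousWithinAt)
    (fun t ht ↦ (hsol t (Ico_subset_Icc_self ht)).2.hasDerivWithinAt) hp₀ fun t ht hct ↦ ?_
  have htJ : t ∈ J := hJ (Ico_subset_Icc_self ht)
  have hqt : q t ∈ K := hqK t (Ico_subset_Icc_self ht)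
  have hAB : A + B < κ * ‖p t‖ :=
    (div_lt_iff₀' hκ).1 (lt_of_pow_lt_pow_left₀ 2 (norm_nonneg _) (hc.trans_lt hct))
  have hfg : ‖f t (q t) (p t) + g t (q t) (p t)‖ < κ * ‖p t‖ :=
    (norm_add_le_of_le (hf t htJ _ hqt _) (hg t htJ _ hqt _)).trans_lt hAB
  rw [add_right_comm]
  exact inner_add_neg_of_norm_lt hfg (hh t htJ _ hqt _ (hdc.trans_lt hct))

theorem kinetic_energy_sublevel_forward_invariant_general
    {f h g : ℝ → E → E → E} {J : Set ℝ} {K : Set E}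
    (hf : ∃ C : ℝ, ∀ t ∈ J, ∀ q ∈ K, ∀ p, ‖f t q p‖ ≤ C)
    (hg : ∃ C : ℝ, ∀ t ∈ J, ∀ q ∈ K, ∀ p, ‖g t q p‖ ≤ C)
    (hh : ∃ d > (0 : ℝ), ∃ k < (0 : ℝ), ∀ t ∈ J, ∀ q ∈ K,
      ∀ p : E, d < ⟪p, p⟫ → ⟪h t q p, p⟫ / ⟪p, p⟫ ≤ k) :
    ∃ c₀ > (0 : ℝ), ∀ c ≥ c₀, ForwardInvariantOver f h g J K {p | ‖p‖ ^ 2 ≤ c} := by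
  obtain ⟨A, hA⟩ := hf
  obtain ⟨B, hB⟩ := hg
  obtain ⟨d, hd, k, hk, hfriction⟩ := hh
  refine ⟨max d (((A + B) / -k) ^ 2), lt_max_of_lt_left hd, fun c hc ↦ ?_⟩
  refine forwardInvariantOver_norm_sq_le (neg_pos.2 hk) hA hB (fun t ht q hq p hp ↦ ?_)
    (le_of_max_le_left hc) (le_of_max_le_right hc)
  have hquot := hfriction t ht q hq p
  rw [real_inner_self_eq_norm_sq] at hquot
  rw [neg_neg]
  exact (div_le_iff₀ (hd.trans hp)).1 (hquot hp)

end

theorem kinetic_energy_sublevel_forward_invariant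
    {E : Type*} [NormedAddCommGroup E] [InnerProductSpace ℝ E] [FiniteDimensional ℝ E]
    (K : Set E) (hK : IsCompact K) (T : ℝ) (hT : 0 < T)
    (f h g : ℝ → E → E → E)
    (hf_cont : Continuous fun u : ℝ × E × E => f u.1 u.2.1 u.2.2)
    (hh_cont : Continuous fun u : ℝ × E × E => h u.1 u.2.1 u.2.2)
    (hg_cont : Continuous fun u : ℝ × E × E => g u.1 u.2.1 u.2.2)
    -- f and g are bounded
    (hf_bdd : ∃ C : ℝ, ∀ t q p, ‖f t q p‖ ≤ C)
    (hg_bdd : ∃ C : ℝ, ∀ t q p, ‖g t q p‖ ≤ C)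
    -- sup { ⟨h(t,q,p),p⟩/⟨p,p⟩ : t ∈ [0,T], q ∈ K, ⟨p,p⟩ > d } < 0
    (hfr : ∃ d > (0 : ℝ), ∃ c < (0 : ℝ), ∀ t ∈ Icc (0 : ℝ) T, ∀ q ∈ K,
      ∀ p : E, d < ⟪p, p⟫ → ⟪h t q p, p⟫ / ⟪p, p⟫ ≤ c) :
    ∃ c > (0 : ℝ), ∀ (t₀ t₁ : ℝ) (q p : ℝ → E),
      Icc t₀ t₁ ⊆ Icc (0 : ℝ) T →
      IsSolution3 f h g q p (Icc t₀ t₁) →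
      (∀ t ∈ Icc t₀ t₁, q t ∈ K) →
      ‖p t₀‖ ^ 2 ≤ c →
      ∀ t ∈ Icc t₀ t₁, ‖p t‖ ^ 2 ≤ c := by
  obtain ⟨c₀, hc₀, hinv⟩ := kinetic_energy_sublevel_forward_invariant_general (J := Icc 0 T)
    (hf_bdd.imp fun _ hC t _ q _ ↦ hC t q) (hg_bdd.imp fun _ hC t _ q _ ↦ hC t q) hfr
  exact ⟨c₀, hc₀, hinv c₀ le_rfl⟩
end
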